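/- Lower bound along a slanted cylinder: Let Y = (y,s) ∈ ℝ^{n+1} with s > 0, let r > 0, and suppose K⁻¹ r |y| ≤ s ≤ K r² for some constant K > 0. Let u ∈ C^{2,1} on the closure of the slanted cylinder V_r(Y) satisfy −u_t + Lu ≤ 0 and u > 0 at every point of V_r(Y), and suppose u ≥ ℓ on D_r := B_r(0) × {0} for some ℓ > 0. Then u ≥ C·ℓ on B_{r/2}(y) × {s}, and in particular u(y,s) ≥ C·ℓ, where C is a positive constant depending only on n, ν, S and K. -/

import Mathlib

open MeasureTheory ENNReal Metric Set RealInnerProductSpace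

noncomputable section

/-- `n`-dimensional Euclidean space. -/
abbrev En (n : ℕ) : Type := EuclideanSpace ℝ (Fin n)

variable {n : ℕ}

/-- Time derivative `u_t`. -/
def Dt (u : En n × ℝ → ℝ) (X : En n × ℝ) : ℝ :=
  deriv (fun t => u (X.1, t)) X.2

/-- First spatial derivative `D_i u`. -/
def Dx (u : En n × ℝ → ℝ) (i : Fin n) (X : En n × ℝ) : ℝ :=
  fderiv ℝ (fun x => u (x, X.2)) X.1 (EuclideanSpace.single i 1)

/-- Second spatial derivative `D_{ij} u`. -/
def Dxx (u : En n × ℝ → ℝ) (i j : Fin n) (X : En n × ℝ) : ℝ :=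
  Dx (Dx u j) i X

/-- `u` is of class `C^{2,1}` on `Q`: `u`, `D_i u`, `D_{ij} u`, `u_t` exist and are
continuous on `Q`. -/
structure IsC21 (u : En n × ℝ → ℝ) (Q : Set (En n × ℝ)) : Prop where
  cont : ContinuousOn u Q
  diff_t : ∀ X ∈ Q, DifferentiableAt ℝ (fun t => u (X.1, t)) X.2
  diff_x : ∀ X ∈ Q, DifferentiableAt ℝ (fun x => u (x, X.2)) X.1
  diff_xx : ∀ j : Fin n, ∀ X ∈ Q, DifferentiableAt ℝ (fun x => Dx u j (x, X.2)) X.1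
  cont_t : ContinuousOn (Dt u) Q
  cont_x : ∀ i, ContinuousOn (Dx u i) Q
  cont_xx : ∀ i j, ContinuousOn (Dxx u i j) Q

/-- Uniform parabolicity with constant `ν` on `Q`:
`ν⁻¹|ξ|² ≤ Σ a_ij ξ_i ξ_j` and `Σ a_ij² ≤ ν²`. -/
def UnifParabolic (ν : ℝ) (a : En n × ℝ → Matrix (Fin n) (Fin n) ℝ)
    (Q : Set (En n × ℝ)) : Prop :=
  ∀ X ∈ Q, (∀ ξ : Fin n → ℝ, ν⁻¹ * (∑ i, ξ i ^ 2) ≤ ∑ i, ∑ j, a X i j * ξ i * ξ j) ∧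
    (∑ i, ∑ j, (a X i j) ^ 2) ≤ ν ^ 2

/-- `Lu = Σ_{ij} a_ij D_ij u + Σ_i b_i D_i u`. -/
def Lop (a : En n × ℝ → Matrix (Fin n) (Fin n) ℝ) (b : En n × ℝ → En n)
    (u : En n × ℝ → ℝ) (X : En n × ℝ) : ℝ :=
  (∑ i, ∑ j, a X i j * Dxx u i j X) + ∑ i, b X i * Dx u i X

/-- `∫ (ess sup_t |f(x,t)|)ⁿ dx`, the `n`-th power of the `L^n_x L^∞_t` norm of `f`
over the set `Q ⊆ ℝⁿ × ℝ`. -/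
def LxnLtinfPow {E : Type*} [NNNorm E] (f : En n × ℝ → E) (Q : Set (En n × ℝ)) : ℝ≥0∞ :=
  ∫⁻ x, (essSup (fun t => (‖f (x, t)‖₊ : ℝ≥0∞)) (volume.restrict {t | (x, t) ∈ Q})) ^ n

/-- The `L^n_x L^∞_t` norm of `f` over `Q`. -/
def LxnLtinf {E : Type*} [NNNorm E] (f : En n × ℝ → E) (Q : Set (En n × ℝ)) : ℝ≥0∞ :=
  (LxnLtinfPow f Q) ^ (1 / (n : ℝ))

/-- The box `B_ρ(y) × (t₁, t₂)`. -/
def box (y : En n) (ρ t₁ t₂ : ℝ) : Set (En n × ℝ) := ball y ρ ×ˢ Ioo t₁ t₂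

/-- The standard parabolic cylinder `Q_r(Y) = B_r(y) × (s - r², s)`. -/
def pcyl (Y : En n × ℝ) (r : ℝ) : Set (En n × ℝ) := box Y.1 r (Y.2 - r ^ 2) Y.2

/-- The slanted cylinder `V_r(Y) = {(x,t) : |x - (t/s)y| < r, 0 < t < s}`. -/
def slantCyl (Y : En n × ℝ) (r : ℝ) : Set (En n × ℝ) :=
  {X | ‖X.1 - (X.2 / Y.2) • Y.1‖ < r ∧ 0 < X.2 ∧ X.2 < Y.2}

/-- Supremum of the positive part `u₊` over a set `A`. -/
def supPos (u : En n × ℝ → ℝ) (A : Set (En n × ℝ)) : ℝ :=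
  sSup ((fun X => max (u X) 0) '' A)

/-- `Ω` is a Lipschitz domain with character `(rΩ, mΩ)`: at every boundary point `y`
there is a coordinate frame, encoded by the unit "vertical" direction `e`, in which
`Ω ∩ B_{rΩ}(y)` is the region above the graph of an `mΩ`-Lipschitz function `φ`
of the tangential variables. -/
def IsLipschitzDomain (Ω : Set (En n)) (rΩ mΩ : ℝ) : Prop :=
  0 < rΩ ∧ 0 ≤ mΩ ∧
  ∀ y ∈ frontier Ω, ∃ (e : En n) (φ : En n → ℝ),
    ‖e‖ = 1 ∧ LipschitzWith (Real.toNNReal mΩ) φ ∧ φ 0 = 0 ∧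
    (∀ x, x ∈ Ω ∩ ball y rΩ ↔
      dist x y < rΩ ∧ φ ((x - y) - ⟪x - y, e⟫ • e) < ⟪x - y, e⟫) ∧
    (∀ ρ : ℝ, 0 < ρ → ρ ≤ rΩ → y + ρ • e ∈ Ω)


/-- Ellipticity of a single matrix. -/
def Ell (ν : ℝ) (A : Matrix (Fin n) (Fin n) ℝ) : Prop :=
  (∀ ξ : Fin n → ℝ, ν⁻¹ * (∑ i, ξ i ^ 2) ≤ ∑ i, ∑ j, A i j * ξ i * ξ j) ∧
    (∑ i, ∑ j, (A i j) ^ 2) ≤ ν ^ 2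

/-- `tr (A T)` in coordinates. -/
def trA (A : Matrix (Fin n) (Fin n) ℝ) (T : En n →L[ℝ] En n) : ℝ :=
  ∑ i, ∑ j, A i j * (T (EuclideanSpace.single i 1)) j

/-- matrix of an operator -/
def opM (T : En n →L[ℝ] En n) : Matrix (Fin n) (Fin n) ℝ :=
  Matrix.of fun i j => (T (EuclideanSpace.single i 1)) j

lemma opM_det (T : En n →L[ℝ] En n) : (opM T).det = T.det := by
  rw [ContinuousLinearMap.det, ← LinearMap.det_toMatrix (EuclideanSpace.basisFun (Fin n) ℝ).toBasis,
    ← Matrix.det_transpose]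
  congr 1

lemma inner_single' (T : En n →L[ℝ] En n) (i j : Fin n) :
    ⟪T (EuclideanSpace.single i 1), EuclideanSpace.single j (1:ℝ)⟫ = opM T i j := by
  simp [opM, EuclideanSpace.inner_single_right]

lemma opM_psd (T : En n →L[ℝ] En n) (hs : ∀ x y, ⟪T x, y⟫ = ⟪x, T y⟫)
    (hp : ∀ x, 0 ≤ ⟪T x, x⟫) : (opM T).PosSemidef := by
  refine Matrix.PosSemidef.of_dotProduct_mulVec_nonneg ?_ ?_
  · ext i j
    simp only [Matrix.conjTranspose_apply, star_trivial]
    rw [← inner_single', ← inner_single', hs, real_inner_comm]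
  · intro x
    have h := hp (WithLp.toLp 2 x)
    have hx : (WithLp.toLp 2 x : En n) = ∑ i, x i • EuclideanSpace.single i (1:ℝ) := by
      ext j
      simp [Finset.sum_apply, Pi.single_apply]
    have key : star x ⬝ᵥ (Matrix.mulVec (opM T) x) = ⟪T (WithLp.toLp 2 x), WithLp.toLp 2 x⟫ := by
      rw [hx, map_sum, sum_inner]
      simp only [star_trivial, dotProduct, Matrix.mulVec]
      refine Finset.sum_congr rfl fun i _ => ?_
      rw [inner_sum, Finset.mul_sum]
      refine Finset.sum_congr rfl fun j _ => ?_
      rw [map_smul, inner_smul_left, inner_smul_right, inner_single']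
      simp [mul_comm]
    rw [key]; exact h

lemma psd_det_le {M : Matrix (Fin n) (Fin n) ℝ} (hM : M.PosSemidef) :
    M.det ≤ M.trace ^ n := by
  have h1 := hM.isHermitian.det_eq_prod_eigenvalues
  have h2 := hM.isHermitian.trace_eq_sum_eigenvalues
  simp only [RCLike.ofReal_real_eq_id, id] at h1 h2
  rw [h1, h2]
  calc _ ≤ ∏ i : Fin n, (∑ j, hM.isHermitian.eigenvalues j) := by
        refine Finset.prod_le_prod (fun i _ => hM.eigenvalues_nonneg i) fun i _ => ?_
        exact Finset.single_le_sum (fun j _ => hM.eigenvalues_nonneg j) (Finset.mem_univ i)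
    _ = _ := by simp

lemma psd_trA {ν : ℝ} {A M : Matrix (Fin n) (Fin n) ℝ} (hM : M.PosSemidef) (hA : Ell ν A) :
    ν⁻¹ * M.trace ≤ ∑ i, ∑ j, A i j * M i j := by
  obtain ⟨m, B, hB⟩ := Matrix.posSemidef_iff_eq_sum_vecMulVec.1 hM
  have hm : ∀ i j, M i j = ∑ k, B k i * B k j := by
    intro i j; rw [hB]; simp [Matrix.sum_apply, Matrix.vecMulVec_apply]
  have h1 : M.trace = ∑ k, ∑ i, B k i ^ 2 := by
    rw [Matrix.trace, Finset.sum_comm]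
    refine Finset.sum_congr rfl fun i _ => ?_
    simp [hm, sq]
  have h2 : ∑ i, ∑ j, A i j * M i j = ∑ k, ∑ i, ∑ j, A i j * B k i * B k j := by
    simp_rw [hm, Finset.mul_sum]
    rw [Finset.sum_congr rfl fun i _ => Finset.sum_comm]
    rw [Finset.sum_comm]
    refine Finset.sum_congr rfl fun k _ => ?_
    refine Finset.sum_congr rfl fun i _ => Finset.sum_congr rfl fun j _ => by ring
  rw [h1, h2, Finset.mul_sum]
  exact Finset.sum_le_sum fun k _ => hA.1 _

lemma Ell.diag_le {ν : ℝ} (hν : 1 ≤ ν) {A : Matrix (Fin n) (Fin n) ℝ} (hA : Ell ν A) :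
    ∑ i, A i i ≤ n * ν := by
  have : ∀ i, A i i ≤ ν := by
    intro i
    have h1 : A i i ^ 2 ≤ ν ^ 2 := by
      refine le_trans ?_ hA.2
      refine le_trans ?_ (Finset.single_le_sum (f := fun i => ∑ j, A i j ^ 2)
        (fun i _ => Finset.sum_nonneg fun j _ => sq_nonneg _) (Finset.mem_univ i))
      exact Finset.single_le_sum (f := fun j => A i j ^ 2) (fun j _ => sq_nonneg _) (Finset.mem_univ i)
    exact le_of_sq_le_sq' h1 (by linarith)
  calc _ ≤ ∑ i : Fin n, ν := Finset.sum_le_sum fun i _ => this i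
    _ = _ := by simp
where
  le_of_sq_le_sq' {a b : ℝ} (h : a ^ 2 ≤ b ^ 2) (hb : 0 ≤ b) : a ≤ b := abs_le_of_sq_le_sq' h hb |>.2

lemma Ell.quad_le {ν : ℝ} (hν : 1 ≤ ν) {A : Matrix (Fin n) (Fin n) ℝ} (hA : Ell ν A)
    (y : En n) : ∑ i, ∑ j, A i j * y i * y j ≤ ν * ‖y‖ ^ 2 := by
  have hy : ‖y‖ ^ 2 = ∑ i, y i ^ 2 := by
    simp [EuclideanSpace.norm_sq_eq]
  have h1 : (∑ i, ∑ j, A i j * y i * y j) ^ 2 ≤ (ν * ‖y‖ ^ 2) ^ 2 := by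
    have := Finset.sum_mul_sq_le_sq_mul_sq (Finset.univ : Finset (Fin n × Fin n))
      (fun q => A q.1 q.2) (fun q => y q.1 * y q.2)
    simp only [Fintype.sum_prod_type] at this
    have h3 : ∑ i, ∑ j, (y i * y j) ^ 2 = (‖y‖ ^ 2) ^ 2 := by
      rw [hy, sq (∑ i, y i ^ 2), Finset.sum_mul_sum]
      refine Finset.sum_congr rfl fun i _ => Finset.sum_congr rfl fun j _ => by ring
    rw [h3] at this
    calc _ = (∑ i, ∑ j, A i j * (y i * y j)) ^ 2 := by simp only [mul_assoc]
      _ ≤ _ := this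
      _ ≤ ν ^ 2 * (‖y‖ ^ 2) ^ 2 := by gcongr; exact hA.2
      _ = _ := by ring
  exact (abs_le_of_sq_le_sq' h1 (by positivity)).2

lemma Ell.quad_ge {ν : ℝ} {A : Matrix (Fin n) (Fin n) ℝ} (hA : Ell ν A)
    (y : En n) : ν⁻¹ * ‖y‖ ^ 2 ≤ ∑ i, ∑ j, A i j * y i * y j := by
  have hy : ‖y‖ ^ 2 = ∑ i, y i ^ 2 := by
    simp [EuclideanSpace.norm_sq_eq]
  rw [hy]; exact hA.1 _

/-- combined: determinant of a nonnegative operator controlled by `tr(AT)`. -/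
lemma det_le_of_trA {ν c : ℝ} (hν : 1 ≤ ν) {A : Matrix (Fin n) (Fin n) ℝ} (hA : Ell ν A)
    (T : En n →L[ℝ] En n) (hs : ∀ x y, ⟪T x, y⟫ = ⟪x, T y⟫)
    (hp : ∀ x, 0 ≤ ⟪T x, x⟫) (hc : trA A T ≤ c) :
    0 ≤ c ∧ 0 ≤ T.det ∧ T.det ≤ (ν * c) ^ n := by
  have hM := opM_psd T hs hp
  have h1 := psd_trA hM hA
  have h2 := psd_det_le hM
  have h3 : 0 ≤ (opM T).trace := hM.trace_nonneg
  have h4 : ν⁻¹ * (opM T).trace ≤ c := h1.trans hc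
  have hν0 : 0 < ν := by linarith
  refine ⟨le_trans (by positivity) h4, ?_, ?_⟩
  · rw [← opM_det]; exact hM.det_nonneg
  · rw [← opM_det]
    refine h2.trans (pow_le_pow_left₀ h3 ?_ n)
    rwa [inv_mul_le_iff₀ hν0] at h4


/-- gradient of the barrier -/
def gP (b : ℝ) (m : ℕ) (y : En n) : En n := (b * (‖y‖ ^ 2) ^ m) • y

/-- Hessian of the barrier -/
def hP (b : ℝ) (m : ℕ) (y : En n) : En n →L[ℝ] En n :=
  (b * (‖y‖ ^ 2) ^ m) • ContinuousLinearMap.id ℝ (En n) +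
    (2 * m * b * (‖y‖ ^ 2) ^ (m - 1)) • (innerSL ℝ y).smulRight y

/-- inverse of the gradient -/
def jP (b : ℝ) (m : ℕ) (q : En n) : En n :=
  ((‖q‖ / b) ^ (((2 * m + 1 : ℕ) : ℝ)⁻¹) / ‖q‖) • q

lemma hP_apply (b : ℝ) (m : ℕ) (y h : En n) :
    hP b m y h = (b * (‖y‖ ^ 2) ^ m) • h + (2 * m * b * (‖y‖ ^ 2) ^ (m - 1) * ⟪y, h⟫) • y := by
  simp [hP, smul_smul]

lemma hasFDerivAt_gP (b : ℝ) (m : ℕ) (y : En n) : HasFDerivAt (gP b m) (hP b m y) y := by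
  have h1 : HasFDerivAt (fun y : En n => ‖y‖ ^ 2) (2 • innerSL ℝ y) y := by
    simpa using (hasStrictFDerivAt_norm_sq y).hasFDerivAt
  have h2 := ((h1.pow m).const_mul b).smul (hasFDerivAt_id y)
  refine h2.congr_fderiv ?_
  ext1 h
  rw [hP_apply]
  simp [smul_smul]
  congr 1
  ring

lemma hasFDerivAt_phi (a : ℝ) (m : ℕ) (y : En n) :
    HasFDerivAt (fun y : En n => a * (‖y‖ ^ 2) ^ (m + 1)) (innerSL ℝ (gP (2 * (m + 1) * a) m y)) y := by
  have h1 : HasFDerivAt (fun y : En n => ‖y‖ ^ 2) (2 • innerSL ℝ y) y := by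
    simpa using (hasStrictFDerivAt_norm_sq y).hasFDerivAt
  have h2 := ((h1.pow (m+1)).const_mul a)
  refine h2.congr_fderiv ?_
  ext1 h
  simp [gP]
  ring

lemma norm_gP {b : ℝ} (hb : 0 ≤ b) (m : ℕ) (y : En n) : ‖gP b m y‖ = b * ‖y‖ ^ (2 * m + 1) := by
  rw [gP, norm_smul, Real.norm_of_nonneg (by positivity)]
  ring

lemma jP_gP {b : ℝ} (hb : 0 < b) (m : ℕ) (y : En n) : jP b m (gP b m y) = y := by
  rcases eq_or_ne y 0 with rfl | hy
  · simp [jP, gP]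
  have hy' : 0 < ‖y‖ := norm_pos_iff.2 hy
  rw [jP, norm_gP hb.le, mul_div_cancel_left₀ _ hb.ne', Real.pow_rpow_inv_natCast hy'.le (by omega)]
  rw [gP, smul_smul]
  convert one_smul ℝ y using 2
  field_simp
  ring

lemma norm_jP {b : ℝ} (hb : 0 < b) (m : ℕ) {q : En n} (hq : q ≠ 0) :
    ‖jP b m q‖ = (‖q‖ / b) ^ (((2 * m + 1 : ℕ) : ℝ)⁻¹) := by
  have hq' : 0 < ‖q‖ := norm_pos_iff.2 hq
  rw [jP, norm_smul, Real.norm_of_nonneg (by positivity)]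
  field_simp

lemma gP_jP {b : ℝ} (hb : 0 < b) (m : ℕ) (q : En n) : gP b m (jP b m q) = q := by
  rcases eq_or_ne q 0 with rfl | hq
  · simp [jP, gP]
  have hq' : 0 < ‖q‖ := norm_pos_iff.2 hq
  have h := norm_jP hb m hq
  have h2 : ‖jP b m q‖ ^ (2 * m + 1) = ‖q‖ / b := by
    rw [h, Real.rpow_inv_natCast_pow (by positivity) (by omega)]
  rw [gP]
  conv_lhs => rw [show jP b m q = (‖jP b m q‖ / ‖q‖) • q by rw [h]; rfl]
  rw [smul_smul, norm_smul, Real.norm_of_nonneg (by positivity), div_mul_cancel₀ _ hq'.ne']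
  convert one_smul ℝ q using 2
  rw [show b * (‖jP b m q‖ ^ 2) ^ m * (‖jP b m q‖ / ‖q‖) = b * ‖jP b m q‖ ^ (2 * m + 1) / ‖q‖ by ring,
    h2]
  field_simp

lemma jP_ne {b : ℝ} (hb : 0 < b) (m : ℕ) {q : En n} (hq : q ≠ 0) : jP b m q ≠ 0 := by
  intro h
  have := gP_jP hb m q
  rw [h] at this
  simp [gP] at this
  exact hq this.symm

lemma jP_contAt {b : ℝ} (hb : 0 < b) (m : ℕ) {q : En n} (hq : q ≠ 0) :
    ContinuousAt (jP b m) q := by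
  have hq' : 0 < ‖q‖ := norm_pos_iff.2 hq
  unfold jP
  refine ContinuousAt.smul (ContinuousAt.div ?_ continuous_norm.continuousAt hq'.ne') continuousAt_id
  refine ContinuousAt.rpow_const (by fun_prop) (Or.inl (by positivity))

lemma det_hP {b : ℝ} (hb : 0 < b) {m : ℕ} (hm : 1 ≤ m) {y : En n} (hy : y ≠ 0) :
    (hP b m y).det = (b * ‖y‖ ^ (2 * m)) ^ n * (2 * m + 1) := by
  have hy' : 0 < ‖y‖ := norm_pos_iff.2 hy
  have : (hP b m y : En n →ₗ[ℝ] En n) = (b * ‖y‖ ^ (2 * m)) •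
      LinearMap.transvection ((innerSL ℝ y : En n →L[ℝ] ℝ) : En n →ₗ[ℝ] ℝ) ((2 * m / ‖y‖ ^ 2) • y) := by
    ext1 h
    simp only [ContinuousLinearMap.coe_coe, hP_apply, LinearMap.smul_apply, LinearMap.transvection.apply,
      smul_add, smul_smul, innerSL_apply_apply]
    obtain ⟨m, rfl⟩ : ∃ k, m = k + 1 := ⟨m - 1, by omega⟩
    congr 2
    · ring
    · simp only [Nat.add_sub_cancel]
      field_simp
      ring
  rw [ContinuousLinearMap.det, this, LinearMap.det_smul, LinearMap.transvection.det]
  simp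
  left
  field_simp
  ring

lemma hP_symm (b : ℝ) (m : ℕ) (y h k : En n) : ⟪hP b m y h, k⟫ = ⟪h, hP b m y k⟫ := by
  simp only [hP_apply, inner_add_left, inner_add_right, inner_smul_left, inner_smul_right]
  simp [real_inner_comm]
  ring

lemma hP_neg (b : ℝ) (m : ℕ) (y : En n) : hP b m (-y) = hP b m y := by
  ext1 h; simp [hP_apply]

lemma gP_neg (b : ℝ) (m : ℕ) (y : En n) : gP b m (-y) = - gP b m y := by
  simp [gP]

lemma hasFDerivAt_jP {b : ℝ} (hb : 0 < b) {m : ℕ} (hm : 1 ≤ m) {q : En n} (hq : q ≠ 0) :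
    ∃ e : En n ≃L[ℝ] En n, (e : En n →L[ℝ] En n) = hP b m (jP b m q) ∧
      HasFDerivAt (jP b m) (e.symm : En n →L[ℝ] En n) q := by
  have hj := jP_ne hb m hq
  have hd : (hP b m (jP b m q)).det ≠ 0 := by
    rw [det_hP hb hm hj]
    have : 0 < ‖jP b m q‖ := norm_pos_iff.2 hj
    positivity
  refine ⟨(hP b m (jP b m q)).toContinuousLinearEquivOfDetNeZero hd, by simp, ?_⟩
  refine HasFDerivAt.of_local_left_inverse (f := gP b m) (jP_contAt hb m hq) ?_ ?_
  · simpa using hasFDerivAt_gP b m (jP b m q)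
  · exact Filter.Eventually.of_forall fun q => gP_jP hb m q

/-- trace bound for the barrier -/
lemma trA_hP {ν b : ℝ} (hν : 1 ≤ ν) (hb : 0 ≤ b) {m : ℕ} (hm : 1 ≤ m)
    {A : Matrix (Fin n) (Fin n) ℝ} (hA : Ell ν A) (y : En n) :
    trA A (hP b m y) ≤ b * ‖y‖ ^ (2 * m) * (ν * (n + 2 * m)) := by
  have h1 := hA.diag_le hν
  have h2 := hA.quad_le hν y
  have : trA A (hP b m y) = (b * ‖y‖ ^ (2 * m)) * (∑ i, A i i) +
      (2 * m * b * (‖y‖ ^ 2) ^ (m - 1)) * ∑ i, ∑ j, A i j * y i * y j := by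
    unfold trA
    simp only [hP_apply, Finset.mul_sum, ← Finset.sum_add_distrib]
    refine Finset.sum_congr rfl fun i _ => ?_
    simp [mul_add, Finset.sum_add_distrib, EuclideanSpace.inner_single_right]
    congr 1
    · ring
    · exact Finset.sum_congr rfl fun j _ => by ring
  rw [this]
  obtain ⟨m, rfl⟩ : ∃ k, m = k + 1 := ⟨m - 1, by omega⟩
  simp only [Nat.add_sub_cancel]
  calc _ ≤ b * ‖y‖ ^ (2 * (m+1)) * (n * ν) + (2 * (m + 1 : ℕ) * b * (‖y‖ ^ 2) ^ m) * (ν * ‖y‖ ^ 2) := by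
        gcongr
    _ = _ := by push_cast; ring

/-- area formula inequality -/
lemma area_le {A Ξ : Set (En n)} (hA : MeasurableSet A) {Ψ : En n → En n}
    {Ψ' : En n → En n →L[ℝ] En n} (hΨ : ∀ x ∈ A, HasFDerivWithinAt Ψ (Ψ' x) A x)
    (hsub : Ξ ⊆ Ψ '' A) {f : En n → ℝ≥0∞} (hf : Measurable f) :
    ∫⁻ ξ in Ξ, f ξ ≤ ∫⁻ x in A, ENNReal.ofReal |(Ψ' x).det| * f (Ψ x) := by
  have hc : ContinuousOn Ψ A := fun x hx => (hΨ x hx).continuousWithinAt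
  have hd := aemeasurable_ofReal_abs_det_fderivWithin (volume : Measure (En n)) hA hΨ
  have hm : AEMeasurable Ψ (volume.restrict A) := hc.aemeasurable hA
  set μ := (volume.restrict A).withDensity (fun x => ENNReal.ofReal |(Ψ' x).det|) with hμ
  have hm' : AEMeasurable Ψ μ := hm.mono_ac (withDensity_absolutelyContinuous _ _)
  have hle : volume.restrict Ξ ≤ μ.map Ψ := by
    refine Measure.le_iff.2 fun E hE => ?_
    rw [Measure.restrict_apply hE, Measure.map_apply_of_aemeasurable hm' hE]
    have hAE : MeasurableSet (A ∩ Ψ ⁻¹' E) := by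
      have : A ∩ Ψ ⁻¹' E = Subtype.val '' ((A.domRestrict Ψ) ⁻¹' E) := by
        ext x; simp [Set.domRestrict, and_comm]
      rw [this]
      exact hA.subtype_image ((continuousOn_iff_continuous_domRestrict.1 hc).measurable hE)
    calc volume (E ∩ Ξ) ≤ volume (Ψ '' (A ∩ Ψ ⁻¹' E)) := by
          refine measure_mono ?_
          rintro ξ ⟨h1, h2⟩
          obtain ⟨x, hx, rfl⟩ := hsub h2
          exact ⟨x, ⟨hx, h1⟩, rfl⟩
      _ ≤ ∫⁻ x in A ∩ Ψ ⁻¹' E, ENNReal.ofReal |(Ψ' x).det| :=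
          addHaar_image_le_lintegral_abs_det_fderiv volume hAE
            fun x hx => (hΨ x hx.1).mono inter_subset_left
      _ = μ (A ∩ Ψ ⁻¹' E) := by
          rw [hμ, withDensity_apply _ hAE, Measure.restrict_restrict hAE,
            inter_eq_left.2 inter_subset_left]
      _ ≤ _ := measure_mono inter_subset_right
  calc _ ≤ ∫⁻ ξ, f ξ ∂(μ.map Ψ) := lintegral_mono' hle le_rfl
    _ = ∫⁻ x, f (Ψ x) ∂μ := lintegral_map' hf.aemeasurable hm'
    _ = _ := by
      exact lintegral_withDensity_eq_lintegral_mul₀ hd (hf.comp_aemeasurable hm)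


/-- the barrier -/
def phi (a : ℝ) (m : ℕ) (y : En n) : ℝ := a * (‖y‖ ^ 2) ^ (m + 1)

lemma phi_cont (a : ℝ) (m : ℕ) : Continuous (phi a m : En n → ℝ) := by
  unfold phi; fun_prop

/-- sliding minimum -/
def mm (c : En n) (R : ℝ) (a : ℝ) (m : ℕ) (w : En n → ℝ) (ξ : En n) : ℝ :=
  sInf ((fun x : closedBall c R => w x + phi a m ((x : En n) - ξ)) '' univ)

section mm
variable {c : En n} {R a : ℝ} {m : ℕ} {w : En n → ℝ}

lemma mm_cont (hw : ContinuousOn w (closedBall c R)) : Continuous (mm c R a m w) := by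
  have : IsCompact (univ : Set (closedBall c R)) :=
    isCompact_iff_isCompact_univ.1 (isCompact_closedBall c R)
  refine this.continuous_sInf (f := fun ξ (x : closedBall c R) => w x + phi a m ((x : En n) - ξ)) ?_
  have h1 : Continuous (fun x : closedBall c R => w x) :=
    continuousOn_iff_continuous_domRestrict.1 hw
  have h2 := phi_cont (n := n) a m
  exact (h1.comp continuous_snd).add
    (h2.comp ((continuous_subtype_val.comp continuous_snd).sub continuous_fst))

lemma mm_exists (hR : 0 ≤ R) (hw : ContinuousOn w (closedBall c R)) (ξ : En n) :
    ∃ x ∈ closedBall c R, w x + phi a m (x - ξ) = mm c R a m w ξ ∧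
      ∀ z ∈ closedBall c R, mm c R a m w ξ ≤ w z + phi a m (z - ξ) := by
  have hcont : ContinuousOn (fun x => w x + phi a m (x - ξ)) (closedBall c R) :=
    hw.add ((phi_cont a m).comp (continuous_id.sub continuous_const)).continuousOn
  obtain ⟨x, hx, hmin⟩ := (isCompact_closedBall c R).exists_isMinOn
    ⟨c, mem_closedBall_self hR⟩ hcont
  have : mm c R a m w ξ = w x + phi a m (x - ξ) := by
    refine IsLeast.csInf_eq ⟨⟨⟨x, hx⟩, mem_univ _, rfl⟩, ?_⟩
    rintro _ ⟨z, -, rfl⟩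
    exact hmin z.2
  exact ⟨x, hx, this.symm, fun z hz => this ▸ hmin hz⟩

lemma mm_le (hR : 0 ≤ R) (hw : ContinuousOn w (closedBall c R)) (ξ : En n) {z : En n}
    (hz : z ∈ closedBall c R) : mm c R a m w ξ ≤ w z + phi a m (z - ξ) := by
  obtain ⟨x, -, -, h⟩ := mm_exists (a := a) (m := m) hR hw ξ
  exact h z hz

end mm

lemma psd_of_localMin {F : En n → ℝ} {G : En n → En n} {M : En n →L[ℝ] En n} {x : En n}
    (hF : ∀ᶠ y in nhds x, HasFDerivAt F (innerSL ℝ (G y)) y) (hG : HasFDerivAt G M x)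
    (hmin : IsLocalMin F x) :
    G x = 0 ∧ (∀ h k, ⟪M h, k⟫ = ⟪h, M k⟫) ∧ ∀ h, 0 ≤ ⟪M h, h⟫ := by
  have h0 : G x = 0 := by
    have := hmin.hasFDerivAt_eq_zero hF.self_of_nhds
    have h2 : innerSL ℝ (G x) (G x) = 0 := by rw [this]; rfl
    simpa using h2
  refine ⟨h0, ?_, ?_⟩
  · intro h k
    have h1 : HasFDerivAt (fun y => innerSL ℝ (G y)) ((innerSL ℝ : En n →L[ℝ] _).comp M) x :=
      (innerSL ℝ : En n →L[ℝ] _).hasFDerivAt.comp x hG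
    have := second_derivative_symmetric_of_eventually hF h1 h k
    simp only [ContinuousLinearMap.comp_apply, innerSL_apply_apply] at this
    rw [this, real_inner_comm]
  · intro h
    by_contra! hneg
    set g : ℝ → En n := fun s => x + s • h with hg
    have hg0 : g 0 = x := by simp [hg]
    have hgd : ∀ s, HasDerivAt g h s := by
      intro s
      have h1 := ((hasDerivAt_id s).smul_const h).const_add x
      rw [one_smul] at h1
      exact h1
    have hgc : ContinuousAt g 0 := (hgd 0).continuousAt
    have hgt : Filter.Tendsto g (nhds 0) (nhds x) := by
      have := hgc.tendsto; rwa [hg0] at this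
    have hd : ∀ᶠ s in nhds (0:ℝ), HasDerivAt (fun s => F (g s)) ⟪G (g s), h⟫ s := by
      filter_upwards [hgt.eventually hF] with s hs
      have h1 := hs.comp_hasDerivAt s (hgd s)
      rw [innerSL_apply_apply] at h1
      exact h1
    have hde : deriv (fun s => F (g s)) =ᶠ[nhds 0] fun s => ⟪G (g s), h⟫ := by
      filter_upwards [hd] with s hs using hs.deriv
    have hdd : HasDerivAt (fun s => ⟪G (g s), h⟫) ⟪M h, h⟫ 0 := by
      have hG' : HasFDerivAt G M (g 0) := by rwa [hg0]
      have h1 : HasDerivAt (fun s => G (g s)) (M h) 0 := hG'.comp_hasDerivAt 0 (hgd 0)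
      have := h1.inner ℝ (hasDerivAt_const (0:ℝ) h)
      simpa using this
    have hd2 : deriv (deriv (fun s => F (g s))) 0 = ⟪M h, h⟫ := by
      rw [hde.deriv_eq, hdd.deriv]
    have hmax : IsLocalMax (fun s => F (g s)) 0 := by
      refine isLocalMax_of_deriv_deriv_neg (by rw [hd2]; exact hneg) ?_
        hd.self_of_nhds.continuousAt
      rw [hde.self_of_nhds]; simp only; rw [hg0, h0]; simp
    have hmin' : ∀ᶠ s in nhds (0:ℝ), F x ≤ F (g s) := hgt.eventually hmin
    have hconst : (fun s => F (g s)) =ᶠ[nhds 0] fun _ => F x := by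
      filter_upwards [hmin', hmax] with s h1 h2
      rw [hg0] at h2
      exact le_antisymm h2 h1
    have h3 : deriv (fun s => F (g s)) =ᶠ[nhds 0] fun _ => 0 := by
      have := hconst.deriv
      simpa using this
    have h4 := h3.deriv_eq
    rw [hd2] at h4
    simp at h4
    linarith

lemma slice {ν ρ R a : ℝ} {m : ℕ} (hn : 0 < n) (hν : 1 ≤ ν) (hρ : 0 < ρ) (hR : 0 < R) (ha : 0 < a)
    (hm : 1 ≤ m) {c : En n} {w : En n → ℝ} {q : En n → En n} {Hs : En n → En n →L[ℝ] En n}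
    {Ξ : Set (En n)} (hΞ : MeasurableSet Ξ) {f : En n → ℝ≥0∞} (hf : Measurable f)
    {D B : En n → ℝ≥0∞}
    (hw : ContinuousOn w (closedBall c R))
    (hw1 : ∀ x ∈ ball c R, HasFDerivAt w (innerSL ℝ (q x)) x)
    (hq : ∀ x ∈ ball c R, HasFDerivAt q (Hs x) x)
    (h_inside : ∀ ξ ∈ Ξ, ∀ x ∈ closedBall c R, w x + phi a m (x - ξ) = mm c R a m w ξ →
      x ∈ ball c R ∧ ‖x - ξ‖ ≤ ρ)
    (hcon : ∀ ξ ∈ Ξ, ∀ x ∈ ball c R, w x + phi a m (x - ξ) = mm c R a m w ξ → ‖ξ - x‖ ≤ ρ →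
      q x = gP (2 * (m + 1) * a) m (ξ - x) →
      (∀ h k, ⟪(Hs x + hP (2 * (m + 1) * a) m (ξ - x)) h, k⟫
        = ⟪h, (Hs x + hP (2 * (m + 1) * a) m (ξ - x)) k⟫) →
      (∀ h, 0 ≤ ⟪(Hs x + hP (2 * (m + 1) * a) m (ξ - x)) h, h⟫) →
      q x ≠ 0 ∧ f ξ ≤ D x ∧ D x ≠ 0 ∧ (B x ≠ ∞ → ∃ A, Ell ν A ∧
        trA A (Hs x + hP (2 * (m + 1) * a) m (ξ - x)) ≤ (B x).toReal * ‖q x‖)) :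
    ∫⁻ ξ in Ξ, f ξ ≤ ∫⁻ x in ball c R, D x * (ENNReal.ofReal ((ν * ρ) ^ n / (2 * m + 1)) * B x ^ n) := by
  set b : ℝ := 2 * (m + 1) * a with hb'
  have hb : 0 < b := by positivity
  have hqc : ContinuousOn q (ball c R) := fun x hx => (hq x hx).continuousAt.continuousWithinAt
  set O : Set (En n) := {x | x ∈ ball c R ∧ q x ≠ 0} with hO
  have hOo : IsOpen O := hqc.isOpen_inter_preimage isOpen_ball isOpen_ne
  set Ψ : En n → En n := fun x => x + jP b m (q x) with hΨ
  have hΨc : ContinuousOn Ψ O := fun x hx => by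
    refine ContinuousWithinAt.add continuousWithinAt_id ?_
    exact (ContinuousAt.comp (jP_contAt hb m hx.2) (hq x hx.1).continuousAt).continuousWithinAt
  set A : Set (En n) := {x | x ∈ O ∧ Ψ x ∈ Ξ ∧ w x + phi a m (x - Ψ x) = mm c R a m w (Ψ x)} with hA
  have hAm : MeasurableSet A := by
    have h1 : Continuous (fun x : O => Ψ x) := continuousOn_iff_continuous_domRestrict.1 hΨc
    have h2 : Continuous (fun x : O => w x) :=
      continuousOn_iff_continuous_domRestrict.1 (hw.mono fun x hx => ball_subset_closedBall hx.1)
    have h3 := phi_cont (n := n) a m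
    have h4 := mm_cont (a := a) (m := m) hw
    have : A = Subtype.val '' {x : O | Ψ x ∈ Ξ ∧ w x + phi a m ((x : En n) - Ψ x) = mm c R a m w (Ψ x)} := by
      ext x; simp [hA]; tauto
    rw [this]
    refine hOo.measurableSet.subtype_image (MeasurableSet.inter (h1.measurable hΞ) ?_)
    refine (isClosed_eq ?_ ?_).measurableSet
    · exact h2.add (h3.comp (continuous_subtype_val.sub h1))
    · exact h4.comp h1
  -- contact information
  have contact : ∀ ξ ∈ Ξ, ∀ x ∈ ball c R, w x + phi a m (x - ξ) = mm c R a m w ξ →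
      q x = gP b m (ξ - x) ∧ (∀ h k, ⟪(Hs x + hP b m (ξ - x)) h, k⟫
        = ⟪h, (Hs x + hP b m (ξ - x)) k⟫) ∧ (∀ h, 0 ≤ ⟪(Hs x + hP b m (ξ - x)) h, h⟫) := by
    intro ξ _ x hx hmin
    have hnb : ball c R ∈ nhds x := isOpen_ball.mem_nhds hx
    have hsub : ∀ y : En n, HasFDerivAt (fun z => z - ξ) (ContinuousLinearMap.id ℝ (En n)) y :=
      fun y => (hasFDerivAt_id y).sub_const ξ
    have := psd_of_localMin (F := fun y => w y + phi a m (y - ξ))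
      (G := fun y => q y + gP b m (y - ξ)) (M := Hs x + hP b m (x - ξ)) (x := x) ?_ ?_ ?_
    · obtain ⟨e1, e2, e3⟩ := this
      have hneg : hP b m (ξ - x) = hP b m (x - ξ) := by rw [← hP_neg, neg_sub]
      rw [hneg]
      refine ⟨?_, e2, e3⟩
      rw [← neg_sub x ξ, gP_neg]
      exact eq_neg_of_add_eq_zero_left e1
    · filter_upwards [hnb] with y hy
      have h1 : HasFDerivAt (fun z => phi a m (z - ξ)) (innerSL ℝ (gP b m (y - ξ))) y := by
        have h3 := (hasFDerivAt_phi a m (y - ξ)).comp y (hsub y)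
        rw [ContinuousLinearMap.comp_id] at h3
        exact h3
      have h2 := (hw1 y hy).add h1
      rw [← map_add] at h2
      exact h2
    · have h1 : HasFDerivAt (fun z => gP b m (z - ξ)) (hP b m (x - ξ)) x := by
        have h3 := (hasFDerivAt_gP b m (x - ξ)).comp x (hsub x)
        rw [ContinuousLinearMap.comp_id] at h3
        exact h3
      exact (hq x hx).add h1
    · filter_upwards [hnb] with y hy
      rw [hmin]
      exact mm_le hR.le hw ξ (ball_subset_closedBall hy)
  have hex : ∀ x, ∃ T : En n →L[ℝ] En n, x ∈ A → HasFDerivWithinAt Ψ T A x ∧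
      (hP b m (jP b m (q x))).det * T.det = (Hs x + hP b m (jP b m (q x))).det := by
    intro x
    by_cases hx : x ∈ A
    · obtain ⟨e, he, hj⟩ := hasFDerivAt_jP hb hm hx.1.2
      refine ⟨ContinuousLinearMap.id ℝ (En n) + (e.symm : En n →L[ℝ] En n).comp (Hs x), fun _ => ⟨?_, ?_⟩⟩
      · exact ((hasFDerivAt_id x).add (hj.comp x (hq x hx.1.1))).hasFDerivWithinAt
      · rw [← he]
        simp only [ContinuousLinearMap.det]
        rw [← LinearMap.det_comp]
        congr 1
        ext1 h
        simp [add_comm]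
    · exact ⟨0, fun h => absurd h hx⟩
  choose Ψ' hΨ' using hex
  have hcov : Ξ ⊆ Ψ '' A := by
    intro ξ hξ
    obtain ⟨x, hx, hmin, -⟩ := mm_exists (a := a) (m := m) hR.le hw ξ
    obtain ⟨hxb, hle⟩ := h_inside ξ hξ x hx hmin
    obtain ⟨e1, e2, e3⟩ := contact ξ hξ x hxb hmin
    obtain ⟨hq0, -⟩ := hcon ξ hξ x hxb hmin (by rwa [norm_sub_rev]) e1 e2 e3
    have hΨx : Ψ x = ξ := by
      simp only [hΨ]; rw [e1, jP_gP hb]; abel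
    refine ⟨x, ⟨⟨hxb, hq0⟩, ?_, ?_⟩, hΨx⟩
    · rw [hΨx]; exact hξ
    · rw [hΨx]; exact hmin
  calc _ ≤ ∫⁻ x in A, ENNReal.ofReal |(Ψ' x).det| * f (Ψ x) :=
        area_le hAm (fun x hx => (hΨ' x hx).1) hcov hf
    _ ≤ ∫⁻ x in A, D x * (ENNReal.ofReal ((ν * ρ) ^ n / (2 * m + 1)) * B x ^ n) := by
        refine setLIntegral_mono' hAm fun x hx => ?_
        obtain ⟨hxb, hle⟩ := h_inside (Ψ x) hx.2.1 x (ball_subset_closedBall hx.1.1) hx.2.2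
        rw [norm_sub_rev] at hle
        obtain ⟨e1, e2, e3⟩ := contact (Ψ x) hx.2.1 x hxb hx.2.2
        obtain ⟨hq0, hfD, hD, hB⟩ := hcon (Ψ x) hx.2.1 x hxb hx.2.2 hle e1 e2 e3
        have hK : 0 < (ν * ρ) ^ n / (2 * m + 1) := by positivity
        by_cases hBx : B x = ∞
        · rw [hBx, ENNReal.top_pow hn.ne', ENNReal.mul_top (by simpa using hK), ENNReal.mul_top hD]
          exact le_top
        · obtain ⟨Am, hAm, htr⟩ := hB hBx
          have hdet := (hΨ' x hx).2
          have hjy : jP b m (q x) = Ψ x - x := by simp [hΨ]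
          rw [hjy] at hdet
          obtain ⟨-, d1, d2⟩ := det_le_of_trA hν hAm _ e2 e3 htr
          have hy0 : Ψ x - x ≠ 0 := by rw [← hjy]; exact jP_ne hb m hq0
          rw [det_hP hb hm hy0] at hdet
          set Y := ‖Ψ x - x‖ with hY
          have hYp : 0 < Y := norm_pos_iff.2 hy0
          have hqn : ‖q x‖ = b * Y ^ (2 * m + 1) := by rw [e1, norm_gP hb.le]
          rw [← hdet] at d1 d2
          have hP0 : 0 < (b * Y ^ (2 * m)) ^ n := by positivity
          have t1 : 0 ≤ (Ψ' x).det := by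
            by_contra! hlt
            have : (b * Y ^ (2 * m)) ^ n * (2 * m + 1) * (Ψ' x).det < 0 :=
              mul_neg_of_pos_of_neg (by positivity) hlt
            linarith
          have t2 : (Ψ' x).det ≤ (ν * ρ) ^ n / (2 * m + 1) * (B x).toReal ^ n := by
            have t3 : (ν * ((B x).toReal * ‖q x‖)) ^ n =
                (b * Y ^ (2 * m)) ^ n * (2 * m + 1) * ((ν * Y) ^ n / (2 * m + 1) * (B x).toReal ^ n) := by
              rw [hqn]; field_simp; rw [← mul_pow, ← mul_pow]; congr 1; ring
            rw [t3] at d2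
            refine (le_of_mul_le_mul_left d2 (by positivity)).trans ?_
            gcongr
          calc _ ≤ ENNReal.ofReal ((ν * ρ) ^ n / (2 * m + 1) * (B x).toReal ^ n) * D x := by
                gcongr
                rwa [abs_of_nonneg t1]
            _ = _ := by
                rw [ENNReal.ofReal_mul hK.le, ENNReal.ofReal_pow toReal_nonneg, ENNReal.ofReal_toReal hBx,
                  mul_comm]
    _ ≤ _ := lintegral_mono_set fun x hx => hx.1.1


lemma sum_lintegral_le' {α : Type*} [MeasurableSpace α] (μ : Measure α) (N : ℕ)
    (f : ℕ → α → ℝ≥0∞) :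
    ∑ i ∈ Finset.range N, ∫⁻ x, f i x ∂μ ≤ ∫⁻ x, ∑ i ∈ Finset.range N, f i x ∂μ := by
  induction N with
  | zero => simp
  | succ N ih =>
    simp only [Finset.sum_range_succ]
    exact (add_le_add_left ih _).trans (le_lintegral_add _ _)

/-- running minimum of the sliding minima -/
def muSeq (F : ℕ → En n → ℝ) : ℕ → En n → ℝ
  | 0 => fun _ => 0
  | i + 1 => fun ξ => min (muSeq F i ξ) (F (i + 1) ξ)

/-- running minimum of the slices -/
def wSeq (w : ℕ → En n → ℝ) : ℕ → En n → ℝ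
  | 0 => fun x => min 0 (w 0 x)
  | i + 1 => fun x => min (wSeq w i x) (w (i + 1) x)

lemma muSeq_nonpos (F : ℕ → En n → ℝ) (i : ℕ) (ξ : En n) : muSeq F i ξ ≤ 0 := by
  induction i with
  | zero => simp [muSeq]
  | succ i ih => exact (min_le_left _ _).trans ih

lemma muSeq_cont {F : ℕ → En n → ℝ} {N : ℕ} (hF : ∀ i ≤ N, Continuous (F i)) (i : ℕ) (hi : i ≤ N) :
    Continuous (muSeq F i) := by
  induction i with
  | zero => exact continuous_const
  | succ i ih => exact (ih (by omega)).min (hF _ hi)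

lemma wSeq_le (w : ℕ → En n → ℝ) (i : ℕ) (x : En n) : wSeq w i x ≤ w i x := by
  cases i with
  | zero => exact min_le_right _ _
  | succ i => exact min_le_right _ _

lemma wSeq_nonpos (w : ℕ → En n → ℝ) (i : ℕ) (x : En n) : wSeq w i x ≤ 0 := by
  induction i with
  | zero => exact min_le_left _ _
  | succ i ih => exact (min_le_left _ _).trans ih

lemma wSeq_ge {w : ℕ → En n → ℝ} {N : ℕ} {H : ℝ} (hH : 0 ≤ H) {x : En n}
    (h : ∀ i ≤ N, -H ≤ w i x) (i : ℕ) (hi : i ≤ N) : -H ≤ wSeq w i x := by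
  induction i with
  | zero => exact le_min (by linarith) (h 0 hi)
  | succ i ih => exact le_min (ih (by omega)) (h _ hi)

lemma muSeq_le_wSeq {F w : ℕ → En n → ℝ} {N : ℕ} {ξ x : En n} {φ : ℝ} (hφ : 0 ≤ φ)
    (h0 : 0 ≤ w 0 x + φ) (h : ∀ i ≤ N, F i ξ ≤ w i x + φ) (i : ℕ) (hi : i ≤ N) :
    muSeq F i ξ ≤ wSeq w i x + φ := by
  induction i with
  | zero =>
    show (0:ℝ) ≤ min 0 (w 0 x) + φ
    rcases min_cases (0:ℝ) (w 0 x) with ⟨e, -⟩ | ⟨e, -⟩ <;> rw [e] <;> linarith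
  | succ i ih =>
    have h1 := ih (by omega)
    have h2 := h _ hi
    show min _ _ ≤ min _ _ + φ
    rcases min_cases (wSeq w i x) (w (i+1) x) with ⟨e, -⟩ | ⟨e, -⟩ <;> rw [e]
    · exact (min_le_left _ _).trans h1
    · exact (min_le_right _ _).trans h2

/-- discrete ABP summation: abstract version over `N` slices -/
lemma abp_sum {ν ρ R a H S : ℝ} {m N : ℕ} (hn : 0 < n) (hν : 1 ≤ ν) (hρ : 0 < ρ) (hR : 0 < R)
    (ha : 0 < a) (hm : 1 ≤ m) (hH : 0 < H) (hS0 : 0 ≤ S) {c : En n} {w : ℕ → En n → ℝ}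
    {q : ℕ → En n → En n} {Hs : ℕ → En n → En n →L[ℝ] En n} {B : En n → ℝ≥0∞}
    (hw : ∀ i ≤ N, ContinuousOn (w i) (closedBall c R))
    (hw1 : ∀ i ≤ N, ∀ x ∈ ball c R, HasFDerivAt (w i) (innerSL ℝ (q i x)) x)
    (hq : ∀ i ≤ N, ∀ x ∈ ball c R, HasFDerivAt (q i) (Hs i x) x)
    (hlow : ∀ i ≤ N, ∀ x ∈ closedBall c R, -H ≤ w i x)
    (h0 : ∀ ξ ∈ ball c (ρ / 16), ∀ x ∈ closedBall c R, 0 ≤ w 0 x + phi a m (x - ξ))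
    (hend : ∀ ξ ∈ ball c (ρ / 16), mm c R a m (w N) ξ ≤ -(H / 2))
    (h_inside : ∀ i ≤ N, ∀ ξ ∈ ball c (ρ / 16), ∀ x ∈ closedBall c R, w i x + phi a m (x - ξ) < 0 →
      x ∈ ball c R ∧ ‖x - ξ‖ ≤ ρ)
    (hcon : ∀ i, i + 1 ≤ N → ∀ ξ ∈ ball c (ρ / 16), ∀ x ∈ ball c R, w (i + 1) x < 0 →
      w (i + 1) x < w i x → ‖ξ - x‖ ≤ ρ →
      q (i + 1) x = gP (2 * (m + 1) * a) m (ξ - x) →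
      (∀ h k, ⟪(Hs (i + 1) x + hP (2 * (m + 1) * a) m (ξ - x)) h, k⟫
        = ⟪h, (Hs (i + 1) x + hP (2 * (m + 1) * a) m (ξ - x)) k⟫) →
      (∀ h, 0 ≤ ⟪(Hs (i + 1) x + hP (2 * (m + 1) * a) m (ξ - x)) h, h⟫) →
      q (i + 1) x ≠ 0 ∧ (B x ≠ ∞ → ∃ A, Ell ν A ∧
        trA A (Hs (i + 1) x + hP (2 * (m + 1) * a) m (ξ - x)) ≤ (B x).toReal * ‖q (i + 1) x‖))
    (hB : ∫⁻ x in ball c R, B x ^ n ≤ ENNReal.ofReal S)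
    (hS : 2 * (ν * 16) ^ n * S < (2 * m + 1) * (volume (ball (0 : En n) 1)).toReal)
    (hN : 1 ≤ N) : False := by
  set Ξ : Set (En n) := ball c (ρ / 16) with hΞ
  set F : ℕ → En n → ℝ := fun i => mm c R a m (w i) with hF
  have hFc : ∀ i ≤ N, Continuous (F i) := fun i hi => mm_cont (hw i hi)
  have hμc : ∀ i ≤ N, Continuous (muSeq F i) := fun i hi => muSeq_cont hFc i hi
  have hphi : ∀ y : En n, 0 ≤ phi a m y := fun y => by unfold phi; positivity
  have hmuW : ∀ i ≤ N, ∀ ξ ∈ Ξ, ∀ x ∈ closedBall c R,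
      muSeq F i ξ ≤ wSeq w i x + phi a m (x - ξ) := fun i hi ξ hξ x hx =>
    muSeq_le_wSeq (hphi _) (h0 ξ hξ x hx) (fun j hj => mm_le hR.le (hw j hj) ξ hx) i hi
  set κ : ℝ≥0∞ := ENNReal.ofReal ((ν * ρ) ^ n / (2 * m + 1)) with hκ
  have key : ∀ i < N, ∫⁻ ξ in Ξ, ENNReal.ofReal (muSeq F i ξ - muSeq F (i + 1) ξ) ≤
      ∫⁻ x in ball c R, ENNReal.ofReal (wSeq w i x - wSeq w (i + 1) x) * (κ * B x ^ n) := by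
    intro i hi
    set f : En n → ℝ≥0∞ := fun ξ => ENNReal.ofReal (muSeq F i ξ - muSeq F (i + 1) ξ) with hf
    have hfm : Measurable f := by
      have h1 := hμc i (by omega)
      have h2 := hμc (i + 1) (by omega)
      exact ENNReal.measurable_ofReal.comp (h1.sub h2).measurable
    set E : Set (En n) := {ξ | f ξ ≠ 0} with hE
    have hEm : MeasurableSet E := hfm (measurableSet_singleton 0).compl
    have hsplit := lintegral_inter_add_sdiff (μ := volume) f Ξ hEm
    have hz : ∫⁻ ξ in Ξ \ E, f ξ = 0 := by
      rw [setLIntegral_congr_fun (g := fun _ => 0) (isOpen_ball.measurableSet.diff hEm)]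
      · simp
      · intro ξ hξ
        by_contra h
        exact hξ.2 h
    rw [hz, add_zero] at hsplit
    rw [← hsplit]
    -- facts at contact points
    have fact : ∀ ξ ∈ Ξ ∩ E, ∀ x ∈ closedBall c R,
        w (i + 1) x + phi a m (x - ξ) = mm c R a m (w (i + 1)) ξ →
        w (i + 1) x + phi a m (x - ξ) < 0 ∧ w (i + 1) x < wSeq w i x ∧
        muSeq F i ξ - muSeq F (i + 1) ξ ≤ wSeq w i x - wSeq w (i + 1) x ∧
        0 < wSeq w i x - wSeq w (i + 1) x := by
      intro ξ hξ x hx hmin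
      have hlt : muSeq F (i + 1) ξ < muSeq F i ξ := by
        have h1 : f ξ ≠ 0 := hξ.2
        simp only [hf, ne_eq, ENNReal.ofReal_eq_zero, not_le] at h1
        linarith
      have he : muSeq F (i + 1) ξ = w (i + 1) x + phi a m (x - ξ) := by
        rw [hmin]
        show min _ _ = F (i + 1) ξ
        refine min_eq_right ?_
        by_contra! hh
        have : muSeq F (i + 1) ξ = muSeq F i ξ := min_eq_left hh.le
        linarith
      have h1 := hmuW i (by omega) ξ hξ.1 x hx
      have h2 := muSeq_nonpos F i ξ
      have h3 : w (i + 1) x < wSeq w i x := by linarith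
      have h4 : wSeq w (i + 1) x = w (i + 1) x := min_eq_right h3.le
      refine ⟨by linarith, h3, by linarith, by linarith⟩
    refine slice hn hν hρ hR ha hm (isOpen_ball.measurableSet.inter hEm) hfm (hw _ hi)
      (hw1 _ hi) (hq _ hi) ?_ ?_
    · intro ξ hξ x hx hmin
      exact h_inside _ hi ξ hξ.1 x hx (fact ξ hξ x hx hmin).1
    · intro ξ hξ x hx hmin hle e1 e2 e3
      obtain ⟨f1, f2, f3, f4⟩ := fact ξ hξ x (ball_subset_closedBall hx) hmin
      have hw0 : w (i + 1) x < 0 := f2.trans_le (wSeq_nonpos _ _ _)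
      obtain ⟨g1, g2⟩ := hcon i hi ξ hξ.1 x hx hw0 (f2.trans_le (wSeq_le _ _ _)) hle e1 e2 e3
      refine ⟨g1, ENNReal.ofReal_le_ofReal f3, ?_, g2⟩
      simpa using f4
  have hup : ∑ i ∈ Finset.range N, ∫⁻ x in ball c R,
      ENNReal.ofReal (wSeq w i x - wSeq w (i + 1) x) * (κ * B x ^ n) ≤
      ENNReal.ofReal (H * ((ν * ρ) ^ n / (2 * m + 1)) * S) := by
    refine (sum_lintegral_le' _ _ _).trans ?_
    calc _ ≤ ∫⁻ x in ball c R, ENNReal.ofReal H * κ * B x ^ n := by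
          refine setLIntegral_mono' isOpen_ball.measurableSet fun x hx => ?_
          rw [← Finset.sum_mul, ← mul_assoc]
          gcongr
          rw [← ENNReal.ofReal_sum_of_nonneg]
          · rw [Finset.sum_range_sub']
            refine ENNReal.ofReal_le_ofReal ?_
            have h1 := wSeq_nonpos w 0 x
            have h2 := wSeq_ge (w := w) (N := N) hH.le
              (fun i hi => hlow i hi x (ball_subset_closedBall hx)) N le_rfl
            linarith
          · intro i _
            have : wSeq w (i + 1) x ≤ wSeq w i x := min_le_left _ _
            linarith
      _ = ENNReal.ofReal H * κ * ∫⁻ x in ball c R, B x ^ n :=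
          lintegral_const_mul' _ _ (ENNReal.mul_ne_top ofReal_ne_top ofReal_ne_top)
      _ ≤ ENNReal.ofReal H * κ * ENNReal.ofReal S := by gcongr
      _ = _ := by
          rw [hκ, ← ENNReal.ofReal_mul (by positivity), ← ENNReal.ofReal_mul (by positivity)]
  have hlo : ENNReal.ofReal (H / 2) * volume Ξ ≤
      ∑ i ∈ Finset.range N, ∫⁻ ξ in Ξ, ENNReal.ofReal (muSeq F i ξ - muSeq F (i + 1) ξ) := by
    rw [← lintegral_finsetSum]
    · rw [← setLIntegral_const]
      refine setLIntegral_mono' isOpen_ball.measurableSet fun ξ hξ => ?_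
      rw [← ENNReal.ofReal_sum_of_nonneg]
      · rw [Finset.sum_range_sub']
        refine ENNReal.ofReal_le_ofReal ?_
        have h1 : muSeq F N ξ ≤ -(H / 2) := by
          obtain ⟨k, rfl⟩ : ∃ k, N = k + 1 := ⟨N - 1, by omega⟩
          exact (min_le_right _ _).trans (hend ξ hξ)
        have h2 : muSeq F 0 ξ = 0 := rfl
        linarith
      · intro i _
        have : muSeq F (i + 1) ξ ≤ muSeq F i ξ := min_le_left _ _
        linarith
    · intro i hi
      have hi := Finset.mem_range.1 hi
      exact ENNReal.measurable_ofReal.comp ((hμc i (by omega)).sub (hμc (i + 1) (by omega))).measurable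
  have hfin := (hlo.trans (Finset.sum_le_sum fun i hi => key i (Finset.mem_range.1 hi))).trans hup
  have : Nonempty (Fin n) := ⟨⟨0, hn⟩⟩
  have hvol : volume Ξ = ENNReal.ofReal ((ρ / 16) ^ n * (volume (ball (0 : En n) 1)).toReal) := by
    rw [hΞ, Measure.addHaar_ball_of_pos _ _ (by positivity), ENNReal.ofReal_mul (by positivity),
      ENNReal.ofReal_toReal measure_ball_lt_top.ne]
    simp
  rw [hvol, ← ENNReal.ofReal_mul (by positivity), ENNReal.ofReal_le_ofReal_iff (by positivity)] at hfin
  set ω := (volume (ball (0 : En n) 1)).toReal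
  have e1 : H / 2 * ((ρ / 16) ^ n * ω) = (H * ρ ^ n / (2 * 16 ^ n * (2 * m + 1))) * ((2 * m + 1) * ω) := by
    rw [div_pow]; field_simp
  have e2 : H * ((ν * ρ) ^ n / (2 * m + 1)) * S =
      (H * ρ ^ n / (2 * 16 ^ n * (2 * m + 1))) * (2 * (ν * 16) ^ n * S) := by
    rw [mul_pow, mul_pow]; field_simp
  rw [e1, e2] at hfin
  have := le_of_mul_le_mul_left hfin (by positivity)
  linarith


lemma trA_add (A : Matrix (Fin n) (Fin n) ℝ) (T U : En n →L[ℝ] En n) :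
    trA A (T + U) = trA A T + trA A U := by
  simp [trA, mul_add, Finset.sum_add_distrib]

lemma hP_zero (b : ℝ) {m : ℕ} (hm : 1 ≤ m) : hP b m (0 : En n) = 0 := by
  ext1 h
  have : m ≠ 0 := by omega
  simp [hP_apply, this]

lemma core_v {ν ρ H S t0 t1 g0 g1 η0 a b : ℝ} {m : ℕ} (hn : 0 < n) (hν : 1 ≤ ν) (hρ : 0 < ρ)
    (hm : 1 ≤ m) (hH : 8 ≤ H) (hS0 : 0 ≤ S) (ht : t0 < t1) {c : En n}
    (ha : a = 2 * H / ρ ^ (2 * m + 2)) (hb : b = 2 * (m + 1) * a)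
    {v vt : En n → ℝ → ℝ} {q : En n → ℝ → En n} {Hs : En n → ℝ → En n →L[ℝ] En n}
    {B : En n → ℝ≥0∞}
    (hvx : ∀ t ∈ Icc t0 t1, ∀ x ∈ ball c (4 / 3 * ρ),
      HasFDerivAt (fun x => v x t) (innerSL ℝ (q x t)) x)
    (hqx : ∀ t ∈ Icc t0 t1, ∀ x ∈ ball c (4 / 3 * ρ), HasFDerivAt (fun x => q x t) (Hs x t) x)
    (hvt : ∀ t ∈ Icc t0 t1, ∀ x ∈ closedBall c (4 / 3 * ρ), HasDerivAt (v x) (vt x t) t)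
    (hvc : ContinuousOn (fun X : En n × ℝ => v X.1 X.2) (closedBall c (4 / 3 * ρ) ×ˢ Icc t0 t1))
    (hvtc : ContinuousOn (fun X : En n × ℝ => vt X.1 X.2) (closedBall c (4 / 3 * ρ) ×ˢ Icc t0 t1))
    (hlow : ∀ t ∈ Icc t0 t1, ∀ x ∈ closedBall c (4 / 3 * ρ), -H ≤ v x t)
    (hpde1 : ∀ t ∈ Ioc t0 t1, ∀ x ∈ ball c (4 / 3 * ρ), B x ≠ ∞ → ∀ η > 0, ∃ A, Ell ν A ∧
      -vt x t + trA A (Hs x t) + ∑ i, ∑ j, A i j * q x t i * q x t j ≤ (B x).toReal * ‖q x t‖ + η)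
    (hpde2 : ∀ t ∈ Ioc t0 t1, ∀ x ∈ ball c (4 / 3 * ρ), q x t = 0 → ∃ A, Ell ν A ∧
      -vt x t + trA A (Hs x t) ≤ 0)
    (h_start : ∀ x ∈ closedBall c (5 / 4 * ρ), g0 ≤ v x t0)
    (hg : ∀ t ∈ Icc t0 t1, g0 + g1 * (t - t0) ≤ 0) (hgend : -(H / 8) ≤ g0 + g1 * (t1 - t0))
    (hp : (3 / 4 : ℝ) ^ (2 * m + 2) ≤ 1 / 16) (hη : 0 < η0)
    (hND : ∀ t ∈ Ioc t0 t1, ∀ x ∈ ball c (4 / 3 * ρ), ∀ ξ ∈ ball c (ρ / 16), ‖ξ - x‖ ≤ ρ →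
      g0 + g1 * (t - t0) ≤ v x t ∨
      η0 ≤ ν⁻¹ * (b * ‖ξ - x‖ ^ (2 * m + 1)) ^ 2 - b * ‖ξ - x‖ ^ (2 * m) * (ν * (n + 2 * m)) - g1)
    (hB : ∫⁻ x in ball c (4 / 3 * ρ), B x ^ n ≤ ENNReal.ofReal S)
    (hS : 2 * (ν * 16) ^ n * S < (2 * m + 1) * (volume (ball (0 : En n) 1)).toReal) :
    ∀ x ∈ closedBall c (11 / 16 * ρ), -H + 1 < v x t1 := by
  intro xs hxs
  by_contra! hbad
  have hH0 : 0 < H := by linarith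
  have ha0 : 0 < a := by rw [ha]; positivity
  have hb0 : 0 < b := by rw [hb]; positivity
  have hR : 0 < 4 / 3 * ρ := by positivity
  set R := 4 / 3 * ρ with hRdef
  -- uniform continuity in time
  obtain ⟨δ, hδ, hδ'⟩ : ∃ δ > 0, ∀ x ∈ closedBall c R, ∀ t ∈ Icc t0 t1, ∀ t' ∈ Icc t0 t1,
      |t - t'| < δ → |vt x t - vt x t'| < η0 / 2 := by
    have hcpt : IsCompact (closedBall c R ×ˢ Icc t0 t1) := (isCompact_closedBall c R).prod isCompact_Icc
    have huc := hcpt.uniformContinuousOn_of_continuous hvtc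
    rw [Metric.uniformContinuousOn_iff] at huc
    obtain ⟨δ, hδ, h⟩ := huc (η0 / 2) (by positivity)
    refine ⟨δ, hδ, fun x hx t ht t' ht' htt => ?_⟩
    have := h (x, t) ⟨hx, ht⟩ (x, t') ⟨hx, ht'⟩ (by simpa [Prod.dist_eq, Real.dist_eq] using htt)
    simpa [Real.dist_eq] using this
  obtain ⟨N, hN⟩ := exists_nat_gt ((t1 - t0) / δ)
  have hNpos : (0:ℝ) < N := lt_of_le_of_lt (div_nonneg (by linarith) hδ.le) hN
  have hN1 : 1 ≤ N := by exact_mod_cast hNpos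
  set h := (t1 - t0) / N with hh
  have hh0 : 0 < h := div_pos (by linarith) hNpos
  have hhδ : h < δ := by
    rw [hh, div_lt_iff₀ hNpos]; rw [div_lt_iff₀ hδ] at hN; linarith
  have hNh : N * h = t1 - t0 := by rw [hh]; field_simp
  set τ : ℕ → ℝ := fun i => t0 + i * h with hτ
  have hτN : τ N = t1 := by simp only [hτ]; linarith
  have hτmem : ∀ i ≤ N, τ i ∈ Icc t0 t1 := by
    intro i hi
    have : (i:ℝ) * h ≤ N * h := by gcongr
    have h2 : 0 ≤ (i:ℝ) * h := by positivity
    constructor <;> simp only [hτ] <;> linarith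
  have hτ0 : τ 0 = t0 := by simp [hτ]
  have hτs : ∀ i, τ (i + 1) = τ i + h := by intro i; simp only [hτ]; push_cast; ring
  set g : ℝ → ℝ := fun t => g0 + g1 * (t - t0) with hgdef
  set w : ℕ → En n → ℝ := fun i x => v x (τ i) - g (τ i) with hwdef
  have hphi : ∀ y : En n, phi a m y = 2 * H * (‖y‖ / ρ) ^ (2 * m + 2) := by
    intro y
    rw [phi, ha, div_pow]; field_simp; ring
  have hphi1 : ∀ y : En n, ρ ≤ ‖y‖ → 2 * H ≤ phi a m y := by
    intro y hy
    rw [hphi]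
    have : 1 ≤ ‖y‖ / ρ := by rwa [le_div_iff₀ hρ, one_mul]
    have := one_le_pow₀ this (n := 2 * m + 2)
    nlinarith
  have hwlow : ∀ i ≤ N, ∀ x ∈ closedBall c R, -H ≤ w i x := by
    intro i hi x hx
    have h1 := hlow _ (hτmem i hi) x hx
    have h2 := hg _ (hτmem i hi)
    simp only [hwdef, hgdef]; linarith
  have hphi0 : ∀ y : En n, 0 ≤ phi a m y := fun y => by unfold phi; positivity
  refine abp_sum (a := a) (m := m) (N := N) (ρ := ρ) (R := R) (c := c) (B := B) (w := w)
    (q := fun i x => q x (τ i)) (Hs := fun i x => Hs x (τ i)) hn hν hρ hR ha0 hm hH0 hS0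
    ?_ ?_ ?_ hwlow ?_ ?_ ?_ ?_ hB hS hN1
  · intro i hi
    refine ContinuousOn.sub ?_ continuousOn_const
    exact hvc.comp (f := fun x => (x, τ i)) (by fun_prop) fun x hx => ⟨hx, hτmem i hi⟩
  · intro i hi x hx
    exact (hvx _ (hτmem i hi) x hx).sub_const _
  · intro i hi x hx
    exact hqx _ (hτmem i hi) x hx
  · intro ξ hξ x hx
    by_cases hxx : ρ ≤ ‖x - ξ‖
    · have := hphi1 _ hxx
      have := hwlow 0 (by omega) x hx
      linarith
    · have h1 : x ∈ closedBall c (5 / 4 * ρ) := by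
        rw [mem_closedBall]
        rw [mem_ball] at hξ
        have := dist_triangle x ξ c
        rw [dist_eq_norm x ξ] at this
        linarith
      have h2 := h_start x h1
      have h3 := hphi0 (x - ξ)
      have : w 0 x = v x t0 - g0 := by simp [hwdef, hgdef, hτ0]
      rw [this]; linarith
  · intro ξ hξ
    have hxR : xs ∈ closedBall c R := closedBall_subset_closedBall (by rw [hRdef]; linarith) hxs
    have hcN : ContinuousOn (w N) (closedBall c R) := by
      refine ContinuousOn.sub ?_ continuousOn_const
      exact hvc.comp (f := fun x => (x, τ N)) (by fun_prop) fun x hx => ⟨hx, hτmem N le_rfl⟩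
    refine (mm_le hR.le hcN ξ hxR).trans ?_
    have h1 : ‖xs - ξ‖ / ρ ≤ 3 / 4 := by
      rw [div_le_iff₀ hρ, ← dist_eq_norm]
      rw [mem_ball'] at hξ; rw [mem_closedBall] at hxs
      have := dist_triangle xs c ξ
      linarith
    have h2 : (‖xs - ξ‖ / ρ) ^ (2 * m + 2) ≤ 1 / 16 := (pow_le_pow_left₀ (by positivity) h1 _).trans hp
    have h3 : phi a m (xs - ξ) ≤ H / 8 := by rw [hphi]; nlinarith
    have h4 : w N xs = v xs t1 - (g0 + g1 * (t1 - t0)) := by simp only [hwdef, hgdef, hτN]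
    rw [h4]; linarith
  · intro i hi ξ hξ x hx hneg
    have h1 : ‖x - ξ‖ < ρ := by
      by_contra! hh
      have := hphi1 _ hh
      have := hwlow i hi x hx
      linarith
    refine ⟨?_, h1.le⟩
    rw [mem_ball]
    rw [mem_ball] at hξ
    have := dist_triangle x ξ c
    rw [dist_eq_norm x ξ] at this
    rw [hRdef]; linarith
  · intro i hi ξ hξ x hx hw0 hwi hle e1 e2 e3
    rw [← hb] at e1 e2 e3 ⊢
    have hxc := ball_subset_closedBall hx
    have hm1 := hτmem (i + 1) hi
    have hm0 := hτmem i (by omega)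
    have hlt : τ i < τ (i + 1) := by rw [hτs]; linarith
    have hioc : τ (i + 1) ∈ Ioc t0 t1 := ⟨lt_of_le_of_lt hm0.1 hlt, hm1.2⟩
    -- time derivative bound
    have hvtb : vt x (τ (i + 1)) ≤ g1 + η0 / 2 := by
      have hder : ∀ t ∈ Icc t0 t1, HasDerivAt (fun t => v x t - g t) (vt x t - g1) t := by
        intro t ht
        have h1 : HasDerivAt g g1 t := by
          have := (((hasDerivAt_id t).sub_const t0).const_mul g1).const_add g0
          rw [mul_one] at this
          exact this
        exact (hvt t ht x hxc).sub h1
      have hsub : Icc (τ i) (τ (i + 1)) ⊆ Icc t0 t1 := Icc_subset_Icc hm0.1 hm1.2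
      obtain ⟨s, hs, hs'⟩ := exists_hasDerivAt_eq_slope (fun t => v x t - g t) (fun t => vt x t - g1) hlt
        (fun t ht => (hder t (hsub ht)).continuousAt.continuousWithinAt)
        (fun t ht => hder t (hsub (Ioo_subset_Icc_self ht)))
      have h1 : vt x s - g1 < 0 := by
        rw [hs']
        refine div_neg_of_neg_of_pos ?_ (by linarith)
        have : v x (τ (i + 1)) - g (τ (i + 1)) < v x (τ i) - g (τ i) := hwi
        linarith
      have h2 := hδ' x hxc (τ (i + 1)) hm1 s (hsub (Ioo_subset_Icc_self hs)) (by
        rw [abs_lt]; constructor <;> linarith [hs.1, hs.2, hτs i])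
      rw [abs_lt] at h2
      linarith [h2.2]
    have hnd : η0 ≤ ν⁻¹ * (b * ‖ξ - x‖ ^ (2 * m + 1)) ^ 2
        - b * ‖ξ - x‖ ^ (2 * m) * (ν * (n + 2 * m)) - g1 := by
      rcases hND _ hioc x hx ξ hξ hle with h1 | h1
      · exfalso
        have : v x (τ (i + 1)) - g (τ (i + 1)) < 0 := hw0
        simp only [hgdef] at this
        linarith
      · exact h1
    have hqn : ‖q x (τ (i + 1))‖ = b * ‖ξ - x‖ ^ (2 * m + 1) := by rw [e1, norm_gP hb0.le]
    refine ⟨?_, ?_⟩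
    · intro hq0
      obtain ⟨A, hA, hA2⟩ := hpde2 _ hioc x hx hq0
      have hy : ‖ξ - x‖ = 0 := by
        rw [hq0, norm_zero] at hqn
        have := (mul_eq_zero.1 hqn.symm).resolve_left hb0.ne'
        exact pow_eq_zero_iff (by omega) |>.1 this
      rw [norm_eq_zero] at hy
      rw [hy, hP_zero b hm, add_zero] at e2 e3
      obtain ⟨h1, -⟩ := det_le_of_trA hν hA _ e2 e3 (c := vt x (τ (i + 1))) (by linarith)
      rw [hy] at hnd
      have hm0 : m ≠ 0 := by omega
      simp [hm0] at hnd
      linarith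
    · intro hBx
      obtain ⟨A, hA, hA2⟩ := hpde1 _ hioc x hx hBx (η0 / 2) (by positivity)
      refine ⟨A, hA, ?_⟩
      have h1 := trA_hP hν hb0.le hm hA (ξ - x)
      have h2 := hA.quad_ge (q x (τ (i + 1)))
      rw [trA_add]
      rw [hqn] at h2 hA2 ⊢
      linarith


/-- supersolution data on a set -/
structure SS (ν S : ℝ) (B : En n → ℝ≥0∞) (u ut : En n → ℝ → ℝ) (G : En n → ℝ → En n)
    (Hu : En n → ℝ → En n →L[ℝ] En n) (Q : Set (En n × ℝ)) : Prop where
  ux : ∀ x t, (x, t) ∈ Q → HasFDerivAt (fun x => u x t) (innerSL ℝ (G x t)) x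
  gx : ∀ x t, (x, t) ∈ Q → HasFDerivAt (fun x => G x t) (Hu x t) x
  dt : ∀ x t, (x, t) ∈ Q → HasDerivAt (u x) (ut x t) t
  uc : ContinuousOn (fun X : En n × ℝ => u X.1 X.2) Q
  utc : ContinuousOn (fun X : En n × ℝ => ut X.1 X.2) Q
  nonneg : ∀ x t, (x, t) ∈ Q → 0 ≤ u x t
  pde1 : ∀ x t, (x, t) ∈ Q → 0 < t → B x ≠ ∞ → ∀ η > 0, ∃ A, Ell ν A ∧
    -ut x t + trA A (Hu x t) ≤ (B x).toReal * ‖G x t‖ + η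
  pde2 : ∀ x t, (x, t) ∈ Q → 0 < t → G x t = 0 → ∃ A, Ell ν A ∧ -ut x t + trA A (Hu x t) ≤ 0
  intB : ∫⁻ x, B x ^ n ≤ ENNReal.ofReal S

lemma core_u {ν ρ H S t0 t1 g0 g1 η0 a b ℓ : ℝ} {m : ℕ} (hn : 0 < n) (hν : 1 ≤ ν) (hρ : 0 < ρ)
    (hm : 1 ≤ m) (hH : 8 ≤ H) (hS0 : 0 ≤ S) (ht0 : 0 ≤ t0) (ht : t0 < t1) (hℓ : 0 < ℓ) {c : En n}
    (ha : a = 2 * H / ρ ^ (2 * m + 2)) (hb : b = 2 * (m + 1) * a)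
    {u ut : En n → ℝ → ℝ} {G : En n → ℝ → En n} {Hu : En n → ℝ → En n →L[ℝ] En n}
    {B : En n → ℝ≥0∞} {Q : Set (En n × ℝ)} (hss : SS ν S B u ut G Hu Q)
    (hQ : closedBall c (4 / 3 * ρ) ×ˢ Icc t0 t1 ⊆ Q)
    (h_start : ∀ x ∈ closedBall c (5 / 4 * ρ), g0 ≤ Real.log (u x t0 + ℓ * Real.exp (-H)) - Real.log ℓ)
    (hg : ∀ t ∈ Icc t0 t1, g0 + g1 * (t - t0) ≤ 0) (hgend : -(H / 8) ≤ g0 + g1 * (t1 - t0))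
    (hp : (3 / 4 : ℝ) ^ (2 * m + 2) ≤ 1 / 16) (hη : 0 < η0)
    (hND : ∀ t ∈ Ioc t0 t1, ∀ x ∈ ball c (4 / 3 * ρ), ∀ ξ ∈ ball c (ρ / 16), ‖ξ - x‖ ≤ ρ →
      g0 + g1 * (t - t0) ≤ Real.log (u x t + ℓ * Real.exp (-H)) - Real.log ℓ ∨
      η0 ≤ ν⁻¹ * (b * ‖ξ - x‖ ^ (2 * m + 1)) ^ 2 - b * ‖ξ - x‖ ^ (2 * m) * (ν * (n + 2 * m)) - g1)
    (hS : 2 * (ν * 16) ^ n * S < (2 * m + 1) * (volume (ball (0 : En n) 1)).toReal) :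
    ∀ x ∈ closedBall c (11 / 16 * ρ), Real.exp (-H) * ℓ ≤ u x t1 := by
  set δ := ℓ * Real.exp (-H) with hδ
  have hδ0 : 0 < δ := by positivity
  have hU : ∀ x t, (x, t) ∈ Q → 0 < u x t + δ := fun x t h => by linarith [hss.nonneg x t h]
  have hQ' : ∀ t ∈ Icc t0 t1, ∀ x ∈ closedBall c (4 / 3 * ρ), (x, t) ∈ Q :=
    fun t ht x hx => hQ ⟨hx, ht⟩
  have hQb : ∀ t ∈ Icc t0 t1, ∀ x ∈ ball c (4 / 3 * ρ), (x, t) ∈ Q :=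
    fun t ht x hx => hQ ⟨ball_subset_closedBall hx, ht⟩
  have hcore := core_v (v := fun x t => Real.log (u x t + δ) - Real.log ℓ)
    (vt := fun x t => (u x t + δ)⁻¹ * ut x t) (q := fun x t => (u x t + δ)⁻¹ • G x t)
    (Hs := fun x t => (u x t + δ)⁻¹ • Hu x t +
      (-((u x t + δ) ^ 2)⁻¹) • (innerSL ℝ (G x t)).smulRight (G x t))
    hn hν hρ hm hH hS0 ht ha hb (B := B) (c := c) (g0 := g0) (g1 := g1) (S := S) (η0 := η0)
    ?_ ?_ ?_ ?_ ?_ ?_ ?_ ?_ h_start hg hgend hp hη hND ?_ hS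
  · intro x hx
    have h1 := hcore x hx
    have hmem : (x, t1) ∈ Q := hQ' t1 ⟨ht.le, le_rfl⟩ x (closedBall_subset_closedBall (by linarith) hx)
    have h2 : Real.log (δ * 2) < Real.log (u x t1 + δ) := by
      have : Real.log (δ * 2) < -H + 1 + Real.log ℓ := by
        rw [hδ, Real.log_mul (by positivity) (by positivity), Real.log_mul hℓ.ne' (by positivity),
          Real.log_exp]
        linarith [Real.log_two_lt_d9]
      linarith
    have h3 := (Real.log_lt_log_iff (by positivity) (hU x t1 hmem)).1 h2
    rw [mul_comm]; linarith
  · intro t ht x hx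
    have h1 := (((hss.ux x t (hQb t ht x hx)).add_const δ).log (hU x t (hQb t ht x hx)).ne').sub_const
      (Real.log ℓ)
    rw [← map_smul] at h1
    exact h1
  · intro t ht x hx
    have hm := hQb t ht x hx
    have h1 := ((hss.ux x t hm).add_const δ)
    have h2 : HasFDerivAt (fun x => (u x t + δ)⁻¹) ((-((u x t + δ) ^ 2)⁻¹) • innerSL ℝ (G x t)) x := by
      exact (hasDerivAt_inv (hU x t hm).ne').comp_hasFDerivAt x h1
    have h3 := h2.smul (hss.gx x t hm)
    refine h3.congr_fderiv ?_
    ext1 h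
    simp [smul_smul]
  · intro t ht x hx
    have hm := hQ' t ht x hx
    have h1 := (((hss.dt x t hm).add_const δ).log (hU x t hm).ne').sub_const (Real.log ℓ)
    rw [div_eq_inv_mul] at h1
    exact h1
  · refine ContinuousOn.sub (ContinuousOn.log ((hss.uc.mono hQ).add continuousOn_const) ?_) continuousOn_const
    exact fun X hX => (hU X.1 X.2 (hQ hX)).ne'
  · refine ContinuousOn.mul (ContinuousOn.inv₀ ((hss.uc.mono hQ).add continuousOn_const) ?_) (hss.utc.mono hQ)
    exact fun X hX => (hU X.1 X.2 (hQ hX)).ne'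
  · intro t ht x hx
    have hm := hQ' t ht x hx
    have : Real.log δ ≤ Real.log (u x t + δ) := Real.log_le_log hδ0 (by linarith [hss.nonneg x t hm])
    rw [hδ, Real.log_mul hℓ.ne' (by positivity), Real.log_exp] at this
    show -H ≤ Real.log (u x t + δ) - Real.log ℓ
    linarith
  · intro t ht x hx hBx η hη
    have hm := hQb t ⟨ht.1.le, ht.2⟩ x hx
    have hU0 := hU x t hm
    obtain ⟨A, hA, hA2⟩ := hss.pde1 x t hm (by linarith [ht.1]) hBx (η * (u x t + δ)) (by positivity)
    refine ⟨A, hA, ?_⟩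
    have e1 := trA_aux A (u x t + δ)⁻¹ (-((u x t + δ) ^ 2)⁻¹) (Hu x t) (G x t)
    rw [e1, norm_smul, Real.norm_of_nonneg (by positivity)]
    have e2 : ∑ i, ∑ j, A i j * ((u x t + δ)⁻¹ • G x t) i * ((u x t + δ)⁻¹ • G x t) j =
        ((u x t + δ) ^ 2)⁻¹ * ∑ i, ∑ j, A i j * G x t i * G x t j := by
      simp only [Finset.mul_sum, PiLp.smul_apply, smul_eq_mul]
      refine Finset.sum_congr rfl fun i _ => Finset.sum_congr rfl fun j _ => ?_
      rw [← inv_pow]; ring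
    rw [e2]
    have e3 := mul_le_mul_of_nonneg_left hA2 (inv_nonneg.2 hU0.le)
    have e4 : (u x t + δ)⁻¹ * (η * (u x t + δ)) = η := by field_simp
    rw [mul_add, mul_add, e4] at e3
    linarith
  · intro t ht x hx hq
    have hm := hQb t ⟨ht.1.le, ht.2⟩ x hx
    have hU0 := hU x t hm
    have hG : G x t = 0 := (smul_eq_zero.1 hq).resolve_left (by positivity)
    obtain ⟨A, hA, hA2⟩ := hss.pde2 x t hm (by linarith [ht.1]) hG
    refine ⟨A, hA, ?_⟩
    have e1 := trA_aux A (u x t + δ)⁻¹ (-((u x t + δ) ^ 2)⁻¹) (Hu x t) (G x t)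
    rw [e1, hG]
    have e3 := mul_le_mul_of_nonneg_left hA2 (inv_nonneg.2 hU0.le)
    simp
    linarith
  · exact (setLIntegral_le_lintegral _ _).trans hss.intB
where
  trA_aux (A : Matrix (Fin n) (Fin n) ℝ) (k l : ℝ) (T : En n →L[ℝ] En n) (y : En n) :
      trA A (k • T + l • (innerSL ℝ y).smulRight y) = k * trA A T +
        l * ∑ i, ∑ j, A i j * y i * y j := by
    simp only [trA, Finset.mul_sum, ← Finset.sum_add_distrib]
    refine Finset.sum_congr rfl fun i _ => Finset.sum_congr rfl fun j _ => ?_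
    simp [EuclideanSpace.inner_single_right]
    ring

/-- algebraic form of the bracket -/
lemma bracket_eq {ρ H Y a b ν F g1 : ℝ} {m : ℕ} (hρ : 0 < ρ)
    (ha : a = 2 * H / ρ ^ (2 * m + 2)) (hb : b = 2 * (m + 1) * a) :
    (ν⁻¹ * (b * Y ^ (2 * m + 1)) ^ 2 - b * Y ^ (2 * m) * F - g1) * ρ ^ 2 =
    ν⁻¹ * (4 * (m + 1)) ^ 2 * H ^ 2 * (Y / ρ) ^ (4 * m + 2)
      - (4 * (m + 1)) * F * H * (Y / ρ) ^ (2 * m) - g1 * ρ ^ 2 := by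
  have e : b = 4 * (m + 1) * H / ρ ^ (2 * m + 2) := by rw [hb, ha]; ring
  have e1 : b * Y ^ (2 * m + 1) * ρ = (4 * (m + 1)) * H * (Y / ρ) ^ (2 * m + 1) := by
    rw [e, div_pow]; field_simp; ring
  have e2 : b * Y ^ (2 * m) * ρ ^ 2 = (4 * (m + 1)) * H * (Y / ρ) ^ (2 * m) := by
    rw [e, div_pow]; field_simp; ring
  calc _ = ν⁻¹ * (b * Y ^ (2 * m + 1) * ρ) ^ 2 - (b * Y ^ (2 * m) * ρ ^ 2) * F - g1 * ρ ^ 2 := by ring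
    _ = _ := by rw [e1, e2]; ring

lemma stage1 {ν S κ : ℝ} {m : ℕ} (hn : 0 < n) (hν : 1 ≤ ν) (hS0 : 0 ≤ S) (hκ : 0 < κ) (hm : 1 ≤ m)
    (hp : (3 / 4 : ℝ) ^ (2 * m + 2) ≤ 1 / 16)
    (hS : 2 * (ν * 16) ^ n * S < (2 * m + 1) * (volume (ball (0 : En n) 1)).toReal) :
    ∃ C : ℝ, 0 < C ∧ C ≤ 1 ∧ ∀ (u ut : En n → ℝ → ℝ) (G : En n → ℝ → En n)
      (Hu : En n → ℝ → En n →L[ℝ] En n) (B : En n → ℝ≥0∞) (Q : Set (En n × ℝ)) (c : En n)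
      (ρ t0 t1 ℓ : ℝ), SS ν S B u ut G Hu Q → 0 < ρ → 0 < ℓ → 0 ≤ t0 → t0 < t1 →
      t1 - t0 ≤ κ * ρ ^ 2 → closedBall c (4 / 3 * ρ) ×ˢ Icc t0 t1 ⊆ Q →
      (∀ x ∈ closedBall c (5 / 4 * ρ), ℓ ≤ u x t0) →
      ∀ x ∈ closedBall c (11 / 16 * ρ), C * ℓ ≤ u x t1 := by
  have hν0 : 0 < ν := by linarith
  set E : ℝ := 4 * (m + 1) with hE
  have hE0 : 0 < E := by positivity
  have hm0 : (0:ℝ) < m := by exact_mod_cast hm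
  set F : ℝ := ν * (n + 2 * m) with hF
  have hF0 : 0 < F := by positivity
  set σ : ℝ := 1 / (16 * κ * (E * F)) with hσ
  have hσ0 : 0 < σ := by positivity
  set H : ℝ := max 8 (ν * F / (E * σ ^ 2)) with hH
  have hH8 : 8 ≤ H := le_max_left _ _
  have hH1 : ν * F / (E * σ ^ 2) ≤ H := le_max_right _ _
  have hH0 : 0 < H := by linarith
  refine ⟨Real.exp (-H), Real.exp_pos _, by rw [Real.exp_le_one_iff]; linarith, ?_⟩
  intro u ut G Hu B Q c ρ t0 t1 ℓ hss hρ hℓ ht0 ht hT hQ hi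
  have hlam : 0 < H / (8 * (κ * ρ ^ 2)) := by positivity
  refine core_u (g0 := 0) (g1 := -(H / (8 * (κ * ρ ^ 2)))) (η0 := H / (16 * (κ * ρ ^ 2))) hn hν hρ hm hH8
    hS0 ht0 ht hℓ rfl rfl hss hQ ?_ ?_ ?_ hp (by positivity) ?_ hS
  · intro x hx
    have h1 := hi x hx
    have : Real.log ℓ ≤ Real.log (u x t0 + ℓ * Real.exp (-H)) :=
      Real.log_le_log hℓ (by have : 0 < ℓ * Real.exp (-H) := by positivity
                             linarith)
    linarith
  · intro t ht
    nlinarith [ht.1]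
  · have : H / (8 * (κ * ρ ^ 2)) * (t1 - t0) ≤ H / (8 * (κ * ρ ^ 2)) * (κ * ρ ^ 2) := by gcongr
    have e : H / (8 * (κ * ρ ^ 2)) * (κ * ρ ^ 2) = H / 8 := by field_simp
    linarith
  · intro t ht x hx ξ hξ hle
    right
    refine le_of_mul_le_mul_right ?_ (show 0 < ρ ^ 2 by positivity)
    rw [bracket_eq hρ rfl rfl]
    rw [← hE, ← hF]
    set z := ‖ξ - x‖ / ρ with hz
    have hz0 : 0 ≤ z := by positivity
    have hz1 : z ≤ 1 := by rw [hz, div_le_one hρ]; exact hle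
    have e1 : H / (16 * (κ * ρ ^ 2)) * ρ ^ 2 = H / (16 * κ) := by field_simp
    have e2 : -(H / (8 * (κ * ρ ^ 2))) * ρ ^ 2 = - (H / (16 * κ)) - H / (16 * κ) := by field_simp; ring
    rw [e1, e2]
    have hHκ : 0 < H / (16 * κ) := by positivity
    have hpos : 0 ≤ ν⁻¹ * E ^ 2 * H ^ 2 * z ^ (4 * m + 2) := by positivity
    by_cases hcase : z ^ (2 * m) ≤ σ
    · have : E * F * H * z ^ (2 * m) ≤ E * F * H * σ := by gcongr
      have e3 : E * F * H * σ = H / (16 * κ) := by rw [hσ]; field_simp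
      linarith
    · push Not at hcase
      have h1 : z ^ (2 * m) * σ ^ 2 ≤ z ^ (4 * m + 2) := by
        calc _ ≤ z ^ (2 * m) * (z ^ (2 * m)) ^ 2 := by gcongr
          _ = z ^ (6 * m) := by ring
          _ ≤ _ := pow_le_pow_of_le_one hz0 hz1 (by omega)
      have h2 : E * F * H * z ^ (2 * m) ≤ ν⁻¹ * E ^ 2 * H ^ 2 * z ^ (4 * m + 2) := by
        rw [div_le_iff₀ (by positivity)] at hH1
        calc _ = ν⁻¹ * E * H * z ^ (2 * m) * (ν * F) := by field_simp
          _ ≤ ν⁻¹ * E * H * z ^ (2 * m) * (H * (E * σ ^ 2)) := by gcongr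
          _ = ν⁻¹ * E ^ 2 * H ^ 2 * (z ^ (2 * m) * σ ^ 2) := by ring
          _ ≤ _ := by gcongr
      linarith

lemma step_lemma {ν S κ : ℝ} (hn : 0 < n) (hν : 1 ≤ ν) (hS0 : 0 ≤ S) (hκ : 0 < κ) :
    ∃ C : ℝ, 0 < C ∧ ∀ (u ut : En n → ℝ → ℝ) (G : En n → ℝ → En n)
      (Hu : En n → ℝ → En n →L[ℝ] En n) (B : En n → ℝ≥0∞) (Q : Set (En n × ℝ)) (c : En n)
      (ρ t0 t1 ℓ : ℝ), SS ν S B u ut G Hu Q → 0 < ρ → 0 < ℓ → 0 ≤ t0 → t0 < t1 →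
      κ / 2 * ρ ^ 2 ≤ t1 - t0 → t1 - t0 ≤ κ * ρ ^ 2 → closedBall c (4 * ρ) ×ˢ Icc t0 t1 ⊆ Q →
      (∀ x ∈ closedBall c (5 / 4 * ρ), ℓ ≤ u x t0) →
      ∀ x ∈ closedBall c (2 * ρ), C * ℓ ≤ u x t1 := by
  have hν0 : 0 < ν := by linarith
  have hne : Nonempty (Fin n) := ⟨⟨0, hn⟩⟩
  set ω := (volume (ball (0 : En n) 1)).toReal with hω
  have hω0 : 0 < ω := ENNReal.toReal_pos (measure_ball_pos _ _ one_pos).ne' measure_ball_lt_top.ne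
  obtain ⟨k, hk⟩ := exists_nat_gt (2 * (ν * 16) ^ n * S / ω)
  set m : ℕ := k + 5 with hmdef
  have hm : 1 ≤ m := by omega
  have hp : (3 / 4 : ℝ) ^ (2 * m + 2) ≤ 1 / 16 := by
    calc (3 / 4 : ℝ) ^ (2 * m + 2) ≤ (3 / 4 : ℝ) ^ 12 :=
          pow_le_pow_of_le_one (by norm_num) (by norm_num) (by omega)
      _ ≤ _ := by norm_num
  have hS : 2 * (ν * 16) ^ n * S < (2 * m + 1) * ω := by
    rw [div_lt_iff₀ hω0] at hk
    refine hk.trans_le ?_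
    gcongr
    rw [hmdef]; push_cast
    have : (0:ℝ) ≤ k := by positivity
    linarith
  obtain ⟨C1, hC1, hC1', h1⟩ := stage1 (n := n) hn hν hS0 hκ hm hp hS
  set E : ℝ := 4 * (m + 1) with hE
  have hE0 : 0 < E := by positivity
  have hm0 : (0:ℝ) < m := by exact_mod_cast hm
  set F : ℝ := ν * (n + 2 * m) with hF
  have hF0 : 0 < F := by positivity
  set σ : ℝ := (1 / 8) ^ (4 * m + 2) with hσ
  have hσ0 : 0 < σ := by positivity
  set H : ℝ := max 8 (ν * (E * F + 18 / κ + 1) / (E ^ 2 * σ)) with hH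
  have hH8 : 8 ≤ H := le_max_left _ _
  have hH1 : ν * (E * F + 18 / κ + 1) / (E ^ 2 * σ) ≤ H := le_max_right _ _
  have hH0 : 0 < H := by linarith
  refine ⟨Real.exp (-H) * C1, by positivity, ?_⟩
  intro u ut G Hu B Q c ρ t0 t1 ℓ hss hρ hℓ ht0 ht hT' hT hQ hi x hx
  rw [mul_assoc]
  have hT0 : 0 < t1 - t0 := by linarith
  have hsub : closedBall c (4 / 3 * ρ) ⊆ closedBall c (4 * ρ) := closedBall_subset_closedBall (by linarith)
  refine core_u (g0 := -H) (g1 := H / (t1 - t0)) (η0 := H / (3 * ρ) ^ 2) (ρ := 3 * ρ) (c := c)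
    (ℓ := C1 * ℓ) hn hν (by positivity) hm hH8 hS0 ht0 ht (by positivity) rfl rfl hss ?_ ?_ ?_ ?_ hp
    (by positivity) ?_ hS x (closedBall_subset_closedBall (by linarith) hx)
  · rw [show 4 / 3 * (3 * ρ) = 4 * ρ by ring]; exact hQ
  · intro x hx
    have hmem : (x, t0) ∈ Q := hQ ⟨closedBall_subset_closedBall (by linarith) hx, le_rfl, ht.le⟩
    have : Real.log (C1 * ℓ * Real.exp (-H)) ≤ Real.log (u x t0 + C1 * ℓ * Real.exp (-H)) :=
      Real.log_le_log (by positivity) (by linarith [hss.nonneg x t0 hmem])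
    rw [Real.log_mul (by positivity) (by positivity), Real.log_exp] at this
    linarith
  · intro t ht'
    have : H / (t1 - t0) * (t - t0) ≤ H / (t1 - t0) * (t1 - t0) := by
      gcongr; exact ht'.2
    rw [div_mul_cancel₀ _ hT0.ne'] at this
    linarith
  · rw [div_mul_cancel₀ _ hT0.ne']; linarith
  · intro t ht' x hx ξ hξ hle
    by_cases hcase : ‖ξ - x‖ ≤ 3 * ρ / 8
    · left
      have hxb : x ∈ closedBall c (11 / 16 * ρ) := by
        rw [mem_closedBall]; rw [mem_ball] at hξ
        have := dist_triangle x ξ c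
        rw [dist_comm x ξ, dist_eq_norm ξ x] at this
        linarith
      have h2 := h1 u ut G Hu B Q c ρ t0 t ℓ hss hρ hℓ ht0 ht'.1 (by linarith [ht'.2])
        (fun X hX => hQ ⟨hsub hX.1, hX.2.1, hX.2.2.trans ht'.2⟩) hi x hxb
      have h3 : Real.log (C1 * ℓ) ≤ Real.log (u x t + C1 * ℓ * Real.exp (-H)) := by
        refine Real.log_le_log (by positivity) ?_
        have : 0 < C1 * ℓ * Real.exp (-H) := by positivity
        linarith
      have h4 : H / (t1 - t0) * (t - t0) ≤ H / (t1 - t0) * (t1 - t0) := by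
        gcongr; exact ht'.2
      rw [div_mul_cancel₀ _ hT0.ne'] at h4
      linarith
    · right
      push Not at hcase
      refine le_of_mul_le_mul_right ?_ (show 0 < (3 * ρ) ^ 2 by positivity)
      rw [bracket_eq (by positivity) rfl rfl]
      rw [← hE, ← hF]
      set z := ‖ξ - x‖ / (3 * ρ) with hz
      have hz0 : 0 ≤ z := by positivity
      have hz1 : z ≤ 1 := by rw [hz, div_le_one (by positivity)]; exact hle
      have hz8 : 1 / 8 ≤ z := by rw [hz, le_div_iff₀ (by positivity)]; linarith
      rw [div_mul_cancel₀ _ (by positivity)]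
      have a1 : z ^ (2 * m) ≤ 1 := pow_le_one₀ hz0 hz1
      have a2 : σ ≤ z ^ (4 * m + 2) := pow_le_pow_left₀ (by norm_num) hz8 _
      have a3 : H / (t1 - t0) * (3 * ρ) ^ 2 ≤ H * (18 / κ) := by
        have : H / (t1 - t0) ≤ H / (κ / 2 * ρ ^ 2) := by gcongr
        calc _ ≤ H / (κ / 2 * ρ ^ 2) * (3 * ρ) ^ 2 := by gcongr
          _ = _ := by field_simp; norm_num
      have a4 : E * F * H * z ^ (2 * m) ≤ E * F * H * 1 := by gcongr
      have a5 : H * (E * F + 18 / κ + 1) ≤ ν⁻¹ * E ^ 2 * H ^ 2 * z ^ (4 * m + 2) := by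
        rw [div_le_iff₀ (by positivity)] at hH1
        calc _ = H * ν⁻¹ * (ν * (E * F + 18 / κ + 1)) := by field_simp
          _ ≤ H * ν⁻¹ * (H * (E ^ 2 * σ)) := by gcongr
          _ = ν⁻¹ * E ^ 2 * H ^ 2 * σ := by ring
          _ ≤ _ := by gcongr
      linarith


/-- spatial gradient -/
def GG (u : En n × ℝ → ℝ) (x : En n) (t : ℝ) : En n := WithLp.toLp 2 (fun i => Dx u i (x, t))

/-- spatial Hessian -/
def HH (u : En n × ℝ → ℝ) (x : En n) (t : ℝ) : En n →L[ℝ] En n := fderiv ℝ (fun x => GG u x t) x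

/-- slanted cylinder with its bottom -/
def QQ (y : En n) (s r : ℝ) : Set (En n × ℝ) :=
  {X | ‖X.1 - (X.2 / s) • y‖ < r ∧ 0 ≤ X.2 ∧ X.2 < s}

lemma isOpen_slant (Y : En n × ℝ) (r : ℝ) : IsOpen (slantCyl Y r) := by
  refine IsOpen.inter (isOpen_lt (f := fun X : En n × ℝ => ‖X.1 - (X.2 / Y.2) • Y.1‖) (by fun_prop)
    continuous_const) (IsOpen.inter ?_ ?_)
  · exact isOpen_lt continuous_const continuous_snd
  · exact isOpen_lt continuous_snd continuous_const

lemma QQ_sub {y : En n} {s r : ℝ} (hs : 0 < s) : QQ y s r ⊆ closure (slantCyl (y, s) r) := by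
  rintro ⟨x, t⟩ ⟨h1, h2, h3⟩
  simp only at h1 h2 h3
  have hc : Filter.Tendsto (fun τ : ℝ => ((x - (t / s) • y) + (τ / s) • y, τ)) (nhdsWithin t (Ioi t)) (nhds (x, t)) := by
    have : ContinuousAt (fun τ : ℝ => ((x - (t / s) • y) + (τ / s) • y, τ)) t := by fun_prop
    have h := this.tendsto
    simp only [sub_add_cancel] at h
    exact h.mono_left nhdsWithin_le_nhds
  refine mem_closure_of_tendsto hc ?_
  filter_upwards [Ioo_mem_nhdsGT h3] with τ hτ
  refine ⟨?_, ?_, hτ.2⟩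
  · simpa using h1
  · exact lt_of_le_of_lt h2 hτ.1

lemma top_mem {e y : En n} {s r : ℝ} (hs : 0 < s) (he : ‖e‖ < r) :
    (e + y, s) ∈ closure (slantCyl (y, s) r) ∧
    Filter.Tendsto (fun τ : ℝ => (e + (τ / s) • y, τ)) (nhdsWithin s (Iio s))
      (nhdsWithin (e + y, s) (closure (slantCyl (y, s) r))) := by
  have hc : Filter.Tendsto (fun τ : ℝ => (e + (τ / s) • y, τ)) (nhdsWithin s (Iio s)) (nhds (e + y, s)) := by
    have : ContinuousAt (fun τ : ℝ => (e + (τ / s) • y, τ)) s := by fun_prop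
    have h := this.tendsto
    rw [div_self hs.ne', one_smul] at h
    exact h.mono_left nhdsWithin_le_nhds
  have ev : ∀ᶠ τ in nhdsWithin s (Iio s), (e + (τ / s) • y, τ) ∈ slantCyl (y, s) r := by
    filter_upwards [Ioo_mem_nhdsLT hs] with τ hτ
    refine ⟨?_, hτ.1, hτ.2⟩
    simpa using he
  exact ⟨mem_closure_of_tendsto hc ev, tendsto_nhdsWithin_iff.2 ⟨hc, ev.mono fun _ h => subset_closure h⟩⟩

lemma GG_diff {u : En n × ℝ → ℝ} {x : En n} {t : ℝ}
    (h : ∀ j, DifferentiableAt ℝ (fun x => Dx u j (x, t)) x) :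
    HasFDerivAt (fun x => GG u x t) (HH u x t) x ∧
    ∀ i j, (HH u x t (EuclideanSpace.single i 1)) j = Dxx u i j (x, t) := by
  have hd : DifferentiableAt ℝ (fun x => GG u x t) x := by
    rw [differentiableAt_piLp]
    exact h
  refine ⟨hd.hasFDerivAt, fun i j => ?_⟩
  have h2 : HasFDerivAt (fun x => Dx u j (x, t)) ((EuclideanSpace.proj j : En n →L[ℝ] ℝ).comp (HH u x t)) x :=
    (EuclideanSpace.proj j : En n →L[ℝ] ℝ).hasFDerivAt.comp x hd.hasFDerivAt
  simp only [Dxx]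
  rw [Dx]
  simp only
  rw [h2.fderiv]
  rfl

lemma ux_aux {u : En n × ℝ → ℝ} {x : En n} {t : ℝ}
    (h : DifferentiableAt ℝ (fun x => u (x, t)) x) :
    HasFDerivAt (fun x => u (x, t)) (innerSL ℝ (GG u x t)) x := by
  have e : innerSL ℝ (GG u x t) = fderiv ℝ (fun x => u (x, t)) x := by
    have : (innerSL ℝ (GG u x t)).toLinearMap = (fderiv ℝ (fun x => u (x, t)) x).toLinearMap := by
      refine (EuclideanSpace.basisFun (Fin n) ℝ).toBasis.ext fun i => ?_
      simp [GG, Dx, EuclideanSpace.inner_single_right]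
    ext v
    exact congrArg (fun T : En n →ₗ[ℝ] ℝ => T v) this
  rw [e]
  exact h.hasFDerivAt

lemma Ell.entry_le {ν : ℝ} (hν : 0 ≤ ν) {A : Matrix (Fin n) (Fin n) ℝ} (h : Ell ν A) (i j : Fin n) :
    |A i j| ≤ ν := by
  refine abs_le_of_sq_le_sq (le_trans ?_ h.2) hν
  refine le_trans ?_ (Finset.single_le_sum (f := fun i => ∑ j, (A i j) ^ 2)
    (fun i _ => Finset.sum_nonneg fun j _ => sq_nonneg _) (Finset.mem_univ i))
  exact Finset.single_le_sum (f := fun j => (A i j) ^ 2) (fun j _ => sq_nonneg _) (Finset.mem_univ j)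

lemma drift_bound (v g : En n) {B : ℝ≥0∞} (hB : B ≠ ∞) (h : (‖v‖₊ : ℝ≥0∞) ≤ B) :
    -(B.toReal * ‖g‖) ≤ ∑ i, v i * g i := by
  have h1 : ‖v‖ ≤ B.toReal := by
    have := ENNReal.toReal_mono hB h
    simpa using this
  have h2 : ∑ i, v i * g i = ⟪g, v⟫ := by
    simp [PiLp.inner_apply]
  rw [h2]
  have h3 := abs_real_inner_le_norm g v
  have h4 : ‖g‖ * ‖v‖ ≤ B.toReal * ‖g‖ := by
    rw [mul_comm]; exact mul_le_mul_of_nonneg_right h1 (norm_nonneg _)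
  linarith [neg_abs_le ⟪g, v⟫]

lemma build_SS {ν S s r ℓ : ℝ} (hν : 1 ≤ ν) {y : En n} {u : En n × ℝ → ℝ}
    {a : En n × ℝ → Matrix (Fin n) (Fin n) ℝ} {b : En n × ℝ → En n}
    (hs : 0 < s) (hℓ : 0 < ℓ)
    (hu : IsC21 u (closure (slantCyl (y, s) r)))
    (ha : UnifParabolic ν a (slantCyl (y, s) r))
    (hb : LxnLtinfPow b (slantCyl (y, s) r) ≤ ENNReal.ofReal S)
    (hpde : ∀ X ∈ slantCyl (y, s) r, -Dt u X + Lop a b u X ≤ 0)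
    (hpos : ∀ X ∈ slantCyl (y, s) r, 0 < u X)
    (h0 : ∀ x ∈ ball (0 : En n) r, ℓ ≤ u (x, 0)) :
    SS ν S (fun x => essSup (fun t => (‖b (x, t)‖₊ : ℝ≥0∞)) (volume.restrict {t | (x, t) ∈ slantCyl (y, s) r}))
      (fun x t => u (x, t)) (fun x t => Dt u (x, t)) (GG u) (HH u) (QQ y s r) := by
  have hQ := QQ_sub (y := y) (r := r) hs
  have hpQ : ∀ x t, (x, t) ∈ QQ y s r → 0 < t → (x, t) ∈ slantCyl (y, s) r :=
    fun x t h ht => ⟨h.1, ht, h.2.2⟩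
  have hG : ∀ x t, (x, t) ∈ closure (slantCyl (y, s) r) → _ := fun x t h =>
    GG_diff (u := u) (x := x) (t := t) (fun j => hu.diff_xx j (x, t) h)
  have htr : ∀ x t, (x, t) ∈ closure (slantCyl (y, s) r) → ∀ A, trA A (HH u x t) =
      ∑ i, ∑ j, A i j * Dxx u i j (x, t) := by
    intro x t h A
    simp only [trA, (hG x t h).2]
  have hLop : ∀ x t, Lop a b u (x, t) = (∑ i, ∑ j, a (x, t) i j * Dxx u i j (x, t)) +
      ∑ i, b (x, t) i * (GG u x t) i := fun x t => rfl
  refine ⟨?_, ?_, ?_, ?_, ?_, ?_, ?_, ?_, hb⟩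
  · exact fun x t h => ux_aux (hu.diff_x (x, t) (hQ h))
  · exact fun x t h => (hG x t (hQ h)).1
  · exact fun x t h => (hu.diff_t (x, t) (hQ h)).hasDerivAt
  · exact hu.cont.mono hQ
  · exact hu.cont_t.mono hQ
  · intro x t h
    rcases h.2.1.lt_or_eq with ht | ht
    · exact (hpos _ (hpQ x t h ht)).le
    · simp only at ht
      subst ht
      refine hℓ.le.trans (h0 x ?_)
      simpa using h.1
  · intro x t h ht hB η hη
    have hm := hpQ x t h ht
    set B := essSup (fun t => (‖b (x, t)‖₊ : ℝ≥0∞)) (volume.restrict {t | (x, t) ∈ slantCyl (y, s) r}) with hBd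
    have hIo : IsOpen {t | (x, t) ∈ slantCyl (y, s) r} :=
      (isOpen_slant (y, s) r).preimage (by fun_prop : Continuous fun t : ℝ => (x, t))
    have hae : ∀ᵐ τ ∂volume.restrict {t | (x, t) ∈ slantCyl (y, s) r}, (‖b (x, τ)‖₊ : ℝ≥0∞) ≤ B :=
      ENNReal.ae_le_essSup _
    rw [ae_restrict_iff' hIo.measurableSet] at hae
    have hden := Measure.dense_of_ae hae
    have hcomp : ∀ f : En n × ℝ → ℝ, ContinuousOn f (closure (slantCyl (y, s) r)) →
        ContinuousAt (fun τ => f (x, τ)) t := by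
      intro f hf
      have h1 : ContinuousAt f (x, t) := hf.continuousAt
        (Filter.mem_of_superset ((isOpen_slant (y, s) r).mem_nhds hm) subset_closure)
      exact ContinuousAt.comp (f := fun τ : ℝ => (x, τ)) h1 (by fun_prop)
    have c1 := hcomp _ hu.cont_t
    have c2 := fun i j => hcomp _ (hu.cont_xx i j)
    have c3 : ContinuousAt (fun τ => GG u x τ) t := by
      refine (PiLp.continuous_toLp 2 _).continuousAt.comp (f := fun τ => fun i => Dx u i (x, τ)) ?_
      exact continuousAt_pi.2 fun i => hcomp _ (hu.cont_x i)
    let err : ℝ → ℝ := fun τ => |Dt u (x, τ) - Dt u (x, t)| +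
      (∑ i, ∑ j, ν * |Dxx u i j (x, τ) - Dxx u i j (x, t)|) + B.toReal * |‖GG u x τ‖ - ‖GG u x t‖|
    have cerr : ContinuousAt err t := by
      refine ((c1.sub continuousAt_const).abs.add ?_).add
        (continuousAt_const.mul (c3.norm.sub continuousAt_const).abs)
      refine tendsto_finsetSum _ fun i _ => tendsto_finsetSum _ fun j _ => ?_
      exact continuousAt_const.mul ((c2 i j).sub continuousAt_const).abs
    have herr0 : err t = 0 := by simp [err]
    have hev : ∀ᶠ τ in nhds t, err τ < η := cerr.eventually_lt continuousAt_const (by simpa [herr0] using hη)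
    obtain ⟨τ, hτ3, hτ1, hτ2⟩ := hden.inter_nhds_nonempty
      (Filter.inter_mem hev (hIo.mem_nhds hm))
    have hτb := hτ3 hτ2
    have hE : Ell ν (a (x, τ)) := ha _ hτ2
    refine ⟨a (x, τ), hE, ?_⟩
    rw [htr x t (hQ h)]
    have hp := hpde _ hτ2
    rw [hLop] at hp
    have hd := drift_bound (b (x, τ)) (GG u x τ) hB hτb
    have hsum : ∑ i, ∑ j, a (x, τ) i j * Dxx u i j (x, t) ≤
        ∑ i, ∑ j, a (x, τ) i j * Dxx u i j (x, τ) +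
        ∑ i, ∑ j, ν * |Dxx u i j (x, τ) - Dxx u i j (x, t)| := by
      simp only [← Finset.sum_add_distrib]
      refine Finset.sum_le_sum fun i _ => Finset.sum_le_sum fun j _ => ?_
      have e1 := hE.entry_le (by linarith) i j
      have e2 := neg_abs_le (a (x, τ) i j * (Dxx u i j (x, τ) - Dxx u i j (x, t)))
      rw [abs_mul] at e2
      have e3 := mul_le_mul_of_nonneg_right e1 (abs_nonneg (Dxx u i j (x, τ) - Dxx u i j (x, t)))
      linarith [mul_sub (a (x, τ) i j) (Dxx u i j (x, τ)) (Dxx u i j (x, t))]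
    have h5 : B.toReal * ‖GG u x τ‖ ≤ B.toReal * ‖GG u x t‖ + B.toReal * |‖GG u x τ‖ - ‖GG u x t‖| := by
      rw [← mul_add]
      exact mul_le_mul_of_nonneg_left (by linarith [le_abs_self (‖GG u x τ‖ - ‖GG u x t‖)]) ENNReal.toReal_nonneg
    have h6 := le_abs_self (Dt u (x, τ) - Dt u (x, t))
    have h7 : err τ < η := hτ1
    simp only [err] at h7
    linarith
  · intro x t h ht hg
    have hm := hpQ x t h ht
    refine ⟨a (x, t), ha _ hm, ?_⟩
    rw [htr x t (hQ h)]
    have hp := hpde _ hm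
    rw [hLop, hg] at hp
    simpa using hp

theorem final_aux
    (n : ℕ) (hn : 0 < n) (ν S K : ℝ) (hν : 1 ≤ ν) (hK : 0 < K) :
    ∃ C : ℝ, 0 < C ∧
      ∀ (y : En n) (s r ℓ : ℝ) (u : En n × ℝ → ℝ)
        (a : En n × ℝ → Matrix (Fin n) (Fin n) ℝ) (b : En n × ℝ → En n),
        0 < s → 0 < r → 0 < ℓ →
        K⁻¹ * r * ‖y‖ ≤ s → s ≤ K * r ^ 2 →
        IsC21 u (closure (slantCyl (y, s) r)) →
        UnifParabolic ν a (slantCyl (y, s) r) →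
        LxnLtinfPow b (slantCyl (y, s) r) ≤ ENNReal.ofReal S →
        (∀ X ∈ slantCyl (y, s) r, -Dt u X + Lop a b u X ≤ 0) →
        (∀ X ∈ slantCyl (y, s) r, 0 < u X) →
        (∀ x ∈ ball (0 : En n) r, ℓ ≤ u (x, 0)) →
        (∀ x ∈ ball y (r / 2), C * ℓ ≤ u (x, s)) := by
  obtain ⟨k, hk⟩ := exists_nat_ge (max 1 (18 * K ^ 2))
  have hk1 : (1 : ℝ) ≤ k := (le_max_left _ _).trans hk
  have hk2 : 18 * K ^ 2 ≤ k := (le_max_right _ _).trans hk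
  have hk0 : (0 : ℝ) < k := by linarith
  obtain ⟨C, hC, hstep⟩ := step_lemma (n := n) (ν := ν) (S := max S 0) (κ := 81 * K / k) hn hν
    (le_max_right _ _) (by positivity)
  refine ⟨C ^ k, by positivity, ?_⟩
  intro y s r ℓ u a b hs hr hℓ hy hsr hu ha hb hpde hpos h0 x0 hx0
  have hb' : LxnLtinfPow b (slantCyl (y, s) r) ≤ ENNReal.ofReal (max S 0) :=
    hb.trans (ENNReal.ofReal_le_ofReal (le_max_left _ _))
  have hss := build_SS hν hs hℓ hu ha hb' hpde hpos h0
  set e := x0 - y with he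
  have hen : ‖e‖ < r / 2 := by rw [he, ← dist_eq_norm]; exact hx0
  -- scale
  set ρ := Real.sqrt (s / K) / 9 with hρd
  have hρ : 0 < ρ := by positivity
  have hsρ : s = 81 * K * ρ ^ 2 := by
    rw [hρd, div_pow, Real.sq_sqrt (by positivity)]; field_simp; norm_num
  have hρr : 9 * ρ ≤ r := by
    have : (9 * ρ) ^ 2 ≤ r ^ 2 := by
      have : K * (9 * ρ) ^ 2 ≤ K * r ^ 2 := by nlinarith
      exact le_of_mul_le_mul_left this hK
    exact le_of_sq_le_sq this hr.le
  have hyρ : ‖y‖ ≤ 9 * K ^ 2 * ρ := by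
    have h1 : r * ‖y‖ ≤ K * s := by
      have := mul_le_mul_of_nonneg_left hy hK.le
      rwa [mul_assoc, mul_inv_cancel_left₀ hK.ne'] at this
    have h2 : 9 * ρ * ‖y‖ ≤ 9 * ρ * (9 * K ^ 2 * ρ) := by
      have := mul_le_mul_of_nonneg_right hρr (norm_nonneg y)
      rw [hsρ] at h1
      nlinarith
    exact le_of_mul_le_mul_left h2 (by positivity)
  have hyk : ‖y‖ / k ≤ ρ / 2 := by
    rw [div_le_iff₀ hk0]; nlinarith
  -- main estimate for tf < s
  have main : ∀ tf, s / 2 ≤ tf → tf < s → C ^ k * ℓ ≤ u (e + (tf / s) • y, tf) := by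
    intro tf htf1 htf2
    have htf0 : 0 < tf := by linarith
    set T := tf / k with hT
    have hT0 : 0 < T := by positivity
    have hkT : k * T = tf := by rw [hT]; field_simp
    have hdrift : ∀ d, |d| ≤ T → ‖(d / s) • y‖ ≤ ρ / 2 := by
      intro d hd
      rw [norm_smul, Real.norm_eq_abs, abs_div, abs_of_pos hs]
      refine le_trans ?_ hyk
      have h1 : |d| / s ≤ 1 / k := by
        rw [div_le_div_iff₀ hs hk0, one_mul]
        have : |d| * k ≤ T * k := mul_le_mul_of_nonneg_right hd hk0.le
        linarith
      calc |d| / s * ‖y‖ ≤ 1 / k * ‖y‖ := mul_le_mul_of_nonneg_right h1 (norm_nonneg _)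
        _ = _ := by ring
    have ind : ∀ j : ℕ, j ≤ k → ∀ x ∈ closedBall (e + ((j * T) / s) • y) (5 / 4 * ρ),
        C ^ j * ℓ ≤ u (x, j * T) := by
      intro j
      induction j with
      | zero =>
        intro _ x hx
        simp only [Nat.cast_zero, zero_mul, zero_div, zero_smul, add_zero, pow_zero, one_mul] at hx ⊢
        refine h0 x ?_
        rw [mem_ball_zero_iff]
        rw [mem_closedBall, dist_eq_norm] at hx
        have := norm_le_norm_add_norm_sub' x e
        linarith
      | succ j ih =>
        intro hj x hx
        have hjk : ((j + 1 : ℕ) : ℝ) ≤ k := by exact_mod_cast hj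
        have hjT : ((j + 1 : ℕ) : ℝ) * T ≤ tf := by
          rw [← hkT]; exact mul_le_mul_of_nonneg_right hjk hT0.le
        have hsub : ((j + 1 : ℕ) : ℝ) * T - j * T = T := by push_cast; ring
        have := hstep _ _ _ _ _ _ (e + ((j * T) / s) • y) ρ (j * T) ((j + 1 : ℕ) * T) (C ^ j * ℓ) hss hρ
          (by positivity) (by positivity) (by linarith) ?_ ?_ ?_ (ih (by omega)) x ?_
        · rw [pow_succ]; linarith
        · have : 81 * K / k / 2 * ρ ^ 2 = (s / 2) / k := by rw [hsρ]; ring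
          rw [hsub, hT, this]
          exact div_le_div_of_nonneg_right htf1 hk0.le
        · rw [hsub, hT, div_mul_eq_mul_div]
          exact div_le_div_of_nonneg_right (by linarith) hk0.le
        · rintro ⟨z, τ⟩ ⟨hz, hτ⟩
          simp only [mem_closedBall, dist_eq_norm, mem_Icc] at hz hτ
          refine ⟨?_, ?_, ?_⟩
          · have h1 := hdrift (j * T - τ) (by rw [abs_le]; constructor <;> linarith)
            have e1 : z - (τ / s) • y = (z - (e + ((j * T) / s) • y)) + e + ((j * T - τ) / s) • y := by
              rw [sub_div, sub_smul]; abel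
            show ‖z - (τ / s) • y‖ < r
            rw [e1]
            refine (norm_add₃_le).trans_lt ?_
            linarith
          · exact le_trans (by positivity) hτ.1
          · show τ < s
            linarith
        · rw [mem_closedBall, dist_eq_norm] at hx ⊢
          have h1 := hdrift T (by rw [abs_of_pos hT0])
          have e1 : x - (e + ((j * T) / s) • y) = (x - (e + (((j + 1 : ℕ) * T) / s) • y)) + (T / s) • y := by
            have : (((j + 1 : ℕ) : ℝ) * T) / s = (j * T) / s + T / s := by push_cast; ring
            rw [this, add_smul]; abel
          rw [e1]
          refine (norm_add_le _ _).trans ?_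
          linarith
    have := ind k le_rfl (e + ((k * T) / s) • y) (mem_closedBall_self (by positivity))
    rwa [hkT] at this
  obtain ⟨hm, ht⟩ := top_mem (e := e) (y := y) (r := r) hs (by linarith)
  have hlim := (hu.cont _ hm).tendsto.comp ht
  have hxe : e + y = x0 := by rw [he]; abel
  rw [hxe] at hlim
  refine ge_of_tendsto hlim ?_
  filter_upwards [Ioo_mem_nhdsLT (show s / 2 < s by linarith)] with τ hτ
  exact main τ hτ.1.le hτ.2

/-- **Lower bound along a slanted cylinder** (Lemma 3.3). -/
theorem slanted_cylinder_lower_bound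
    (n : ℕ) (hn : 0 < n) (ν S K : ℝ) (hν : 1 ≤ ν) (hK : 0 < K) :
    ∃ C : ℝ, 0 < C ∧
      ∀ (y : En n) (s r ℓ : ℝ) (u : En n × ℝ → ℝ)
        (a : En n × ℝ → Matrix (Fin n) (Fin n) ℝ) (b : En n × ℝ → En n),
        0 < s → 0 < r → 0 < ℓ →
        K⁻¹ * r * ‖y‖ ≤ s → s ≤ K * r ^ 2 →
        IsC21 u (closure (slantCyl (y, s) r)) →
        UnifParabolic ν a (slantCyl (y, s) r) →
        LxnLtinfPow b (slantCyl (y, s) r) ≤ ENNReal.ofReal S →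
        (∀ X ∈ slantCyl (y, s) r, -Dt u X + Lop a b u X ≤ 0) →
        (∀ X ∈ slantCyl (y, s) r, 0 < u X) →
        (∀ x ∈ ball (0 : En n) r, ℓ ≤ u (x, 0)) →
        (∀ x ∈ ball y (r / 2), C * ℓ ≤ u (x, s)) ∧ C * ℓ ≤ u (y, s) := by
  obtain ⟨C, hC, h⟩ := final_aux n hn ν S K hν hK
  refine ⟨C, hC, ?_⟩
  intro y s r ℓ u a b hs hr hℓ hy hsr hu ha hb hpde hpos h0
  have h1 := h y s r ℓ u a b hs hr hℓ hy hsr hu ha hb hpde hpos h0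
  exact ⟨h1, h1 y (mem_ball_self (by positivity))⟩
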